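/- There is an absolute constant c > 0 with the following property. Let Γ ≤ SL(2,ℝ) be a subgroup, let P₁, P₂ ⊆ ℍ² be finite sets such that d_Γ(p,q) ≠ 0 for all distinct p, q ∈ P₁ ∪ P₂, and let Γ₀ ⊆ Γ be a finite subset of cardinality K ≥ 1 which is a geodesic cover for P₁ ∪ P₂. Then, with n = |P₁ ∪ P₂| ≥ 2, the number of distinct cross distances satisfies |{d_Γ(p₁,p₂) : p₁ ∈ P₁, p₂ ∈ P₂}| ≥ (c / (K³)) · |P₁|² · |P₂|² / (n³ · log(K·n)). -/

import Mathlib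

open scoped UpperHalfPlane MatrixGroups

noncomputable section

instance : DecidableEq ℍ := Classical.decEq _

/-- The quotient pseudo-distance `d_Γ(p,q) = inf_{γ ∈ Γ} d(p, γ·q)` associated to a
subgroup `Γ ≤ SL(2,ℝ)` acting on the hyperbolic plane. -/
def quotDist (Γ : Subgroup SL(2, ℝ)) (p q : ℍ) : ℝ :=
  ⨅ γ : Γ, dist p ((γ : SL(2, ℝ)) • q)

lemma PA_sum_trunc (t n : ℕ) : 2 * ∑ j ∈ Finset.range n, (t + 1 - j) ≤ (t + 1) * (t + 2) := by
  induction t generalizing n with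
  | zero =>
    cases n with
    | zero => simp
    | succ n => rw [Finset.sum_range_succ']; simp
  | succ t ih =>
    cases n with
    | zero => simp
    | succ n =>
      rw [Finset.sum_range_succ']
      have : ∀ j, t + 1 + 1 - (j + 1) = t + 1 - j := by intro j; omega
      simp only [this]
      have := ih n
      simp only [Nat.sub_zero]
      nlinarith

lemma PA_rank_sum {E : Type*} [DecidableEq E] {m : ℕ} (σ : E → Fin m)
    (hσ : Function.Injective σ) (F : ℕ → ℕ) (T : Finset E) :
    ∑ x ∈ T, F ((T.filter (fun y => σ y < σ x)).card) = ∑ j ∈ Finset.range T.card, F j := by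
  induction T using Finset.induction_on_max_value σ with
  | empty => simp
  | insert a s ha hmax ih =>
    have hlt : ∀ x ∈ s, σ x < σ a := fun x hx =>
      lt_of_le_of_ne (hmax x hx) (fun h => ha (hσ h ▸ hx))
    rw [Finset.sum_insert ha, Finset.card_insert_of_notMem ha, Finset.sum_range_succ, add_comm]
    congr 1
    · rw [← ih]
      refine Finset.sum_congr rfl fun x hx => ?_
      rw [Finset.filter_insert, if_neg (not_lt.mpr (hmax x hx))]
    · rw [Finset.filter_insert, if_neg (lt_irrefl _), Finset.filter_true_of_mem hlt]

lemma PA_exists_order {E : Type*} [Fintype E] [DecidableEq E] (nb : E → Finset E) (A0 t : ℕ)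
    (h1 : ∀ e, e ∉ nb e) (h2 : ∀ e, (nb e).card = A0) :
    ∃ σ : E ≃ Fin (Fintype.card E),
      2 * (A0 + 1) * ∑ e, (t + 1 - ((nb e).filter (fun y => σ y < σ e)).card)
        ≤ Fintype.card E * ((t + 1) * (t + 2)) := by
  by_contra hcon
  push Not at hcon
  set F : ℕ → ℕ := fun j => t + 1 - j with hF
  have key : ∀ e : E, 2 * (A0 + 1) * ∑ σ : E ≃ Fin (Fintype.card E),
      F ((nb e).filter (fun y => σ y < σ e)).card ≤
      Fintype.card (E ≃ Fin (Fintype.card E)) * ((t + 1) * (t + 2)) := by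
    intro e
    set T := insert e (nb e) with hT
    have hTc : T.card = A0 + 1 := by rw [hT, Finset.card_insert_of_notMem (h1 e), h2]
    have hsym : ∀ x ∈ T, ∑ σ : E ≃ Fin (Fintype.card E), F (T.filter (fun y => σ y < σ x)).card
        = ∑ σ : E ≃ Fin (Fintype.card E), F ((nb e).filter (fun y => σ y < σ e)).card := by
      intro x hx
      have he : e ∈ T := Finset.mem_insert_self _ _
      refine Fintype.sum_equiv (Equiv.equivCongr (Equiv.swap e x) (Equiv.refl _)) _ _ ?_
      intro σ
      congr 1
      refine Finset.card_bij (fun y _ => Equiv.swap e x y) ?_ ?_ ?_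
      · intro y hy
        rw [Finset.mem_filter] at hy ⊢
        have hyx : y ≠ x := by rintro rfl; exact lt_irrefl _ hy.2
        have hmem : Equiv.swap e x y ∈ T := by
          by_cases hye : y = e
          · subst hye; simpa using hx
          · rw [Equiv.swap_apply_of_ne_of_ne hye hyx]; exact hy.1
        have hne : Equiv.swap e x y ≠ e := by
          intro h
          apply hyx
          have := congrArg (Equiv.swap e x) h
          simpa using this
        refine ⟨(Finset.mem_insert.mp hmem).resolve_left hne, ?_⟩
        simpa [Equiv.equivCongr] using hy.2
      · intro y _ z _ h
        exact (Equiv.swap e x).injective h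
      · intro y hy
        rw [Finset.mem_filter] at hy
        refine ⟨Equiv.swap e x y, ?_, by simp⟩
        rw [Finset.mem_filter]
        have hye : y ≠ e := by rintro rfl; exact lt_irrefl _ hy.2
        refine ⟨?_, ?_⟩
        · by_cases hyx : y = x
          · subst hyx; simpa using he
          · rw [Equiv.swap_apply_of_ne_of_ne hye hyx]; exact Finset.mem_insert_of_mem hy.1
        · simpa [Equiv.equivCongr] using hy.2
    have h3 : (A0 + 1) * ∑ σ : E ≃ Fin (Fintype.card E), F ((nb e).filter (fun y => σ y < σ e)).card
        = ∑ σ : E ≃ Fin (Fintype.card E), ∑ j ∈ Finset.range (A0 + 1), F j := by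
      rw [← hTc, ← smul_eq_mul, ← Finset.sum_const, ← Finset.sum_congr rfl hsym, Finset.sum_comm]
      refine Finset.sum_congr rfl fun σ _ => ?_
      rw [PA_rank_sum σ σ.injective F T]
    rw [mul_assoc, h3, Finset.sum_const, Finset.card_univ, smul_eq_mul, mul_left_comm]
    exact Nat.mul_le_mul_left _ (PA_sum_trunc t _)
  have hsum : ∑ σ : E ≃ Fin (Fintype.card E), Fintype.card E * ((t + 1) * (t + 2)) <
      ∑ σ : E ≃ Fin (Fintype.card E),
        2 * (A0 + 1) * ∑ e, (t + 1 - ((nb e).filter (fun y => σ y < σ e)).card) :=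
    Finset.sum_lt_sum_of_nonempty ⟨Fintype.equivFin E, Finset.mem_univ _⟩ fun σ _ => hcon σ
  rw [Finset.sum_const, ← Finset.mul_sum, Finset.sum_comm, Finset.mul_sum] at hsum
  have h4 := Finset.sum_le_sum (s := Finset.univ) fun e _ => key e
  simp only [Finset.sum_const, Finset.card_univ, smul_eq_mul] at hsum h4
  have : Fintype.card (E ≃ Fin (Fintype.card E)) * (Fintype.card E * ((t + 1) * (t + 2))) =
    Fintype.card E * (Fintype.card (E ≃ Fin (Fintype.card E)) * ((t + 1) * (t + 2))) := by ring
  rw [this] at hsum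
  exact absurd h4 (not_le.mpr hsum)

/-- monomials -/
def pbMono {R : Type*} [CommSemiring R] (p q r s : R) (d i j : ℕ) : R :=
  q ^ (min i j) * p ^ (j - min i j) * s ^ (i - min i j) * r ^ (d - max i j)

lemma pbMono_smul {R : Type*} [CommSemiring R] (u p q r s : R) (d i j : ℕ) (hi : i ≤ d)
    (hj : j ≤ d) : pbMono (u * p) (u * q) (u * r) (u * s) d i j = u ^ d * pbMono p q r s d i j := by
  unfold pbMono
  simp only [mul_pow]
  have : u ^ d = u ^ (min i j) * u ^ (j - min i j) * u ^ (i - min i j) * u ^ (d - max i j) := by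
    rw [← pow_add, ← pow_add, ← pow_add]; congr 1; omega
  rw [this]; ring

abbrev PBJ (t : ℕ) : Type := Σ l : Fin (t / 2 + 1), Fin (t - 2 * l + 1) × Fin (t - 2 * l + 1)

lemma pb_card (t : ℕ) : 6 * Fintype.card (PBJ t) = (t + 1) * (t + 2) * (t + 3) := by
  have h : ∀ t : ℕ, Fintype.card (PBJ t) =
      ∑ l ∈ Finset.range (t / 2 + 1), (t - 2 * l + 1) * (t - 2 * l + 1) := by
    intro t
    simp only [PBJ, Fintype.card_sigma, Fintype.card_prod, Fintype.card_fin]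
    rw [Finset.sum_range]
  rw [h]
  induction t using Nat.strong_induction_on with
  | _ t ih =>
    rcases t with _ | _ | t
    · simp
    · simp
    · have h2 : (t + 1 + 1) / 2 + 1 = (t / 2 + 1) + 1 := by omega
      rw [h2, Finset.sum_range_succ']
      have h3 : ∀ l, t + 1 + 1 - 2 * (l + 1) = t - 2 * l := by intro l; omega
      simp only [h3]
      have := ih t (by omega)
      rw [mul_add, this]
      simp only [Nat.mul_zero, Nat.sub_zero]
      ring

lemma pb_roots (d : ℕ) (w : Fin (d + 1) → ℂ) (hw : ∃ i, w i ≠ 0) {γ : Type*} (f : γ → ℂ)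
    (hf : Function.Injective f) (S : Finset γ) (hS : ∀ s ∈ S, ∑ i, w i * f s ^ (i : ℕ) = 0) :
    S.card ≤ d := by
    classical
    obtain ⟨i, hi⟩ := hw
    by_contra hlt
    push Not at hlt
    set q : Polynomial ℂ := ∑ i : Fin (d + 1), Polynomial.C (w i) * Polynomial.X ^ (i : ℕ) with hq
    have hdeg : q.natDegree ≤ d := by
      refine Polynomial.natDegree_sum_le_of_forall_le _ _ fun i _ => ?_
      exact (Polynomial.natDegree_C_mul_X_pow_le _ _).trans (by omega)
    have hz : q = 0 := by
      refine Polynomial.eq_zero_of_natDegree_lt_card_of_eval_eq_zero' q (S.image f) ?_ ?_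
      · intro x hx
        obtain ⟨s, hs, rfl⟩ := Finset.mem_image.mp hx
        simpa [hq, Polynomial.eval_finsetSum] using hS s hs
      · rw [Finset.card_image_of_injective _ hf]; omega
    apply hi
    have := congrArg (fun p => Polynomial.coeff p (i : ℕ)) hz
    simp only [hq, Polynomial.finsetSum_coeff, Polynomial.coeff_C_mul_X_pow,
      Polynomial.coeff_zero] at this
    rw [Finset.sum_eq_single i] at this
    · simpa using this
    · intro b _ hb; rw [if_neg]; intro h; exact hb (Fin.ext h.symm)
    · simp

/-- Schwartz–Zippel on a grid -/
lemma pb_sz {α β : Type*} [DecidableEq α] [DecidableEq β] (u : α → ℂ) (v : β → ℂ)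
    (hu : Function.Injective u) (hv : Function.Injective v) (A : Finset α) (B : Finset β)
    (E : Finset (α × β)) (hE : E ⊆ A ×ˢ B) (d : ℕ) (c : Fin (d + 1) → Fin (d + 1) → ℂ)
    (hc : ∃ i j, c i j ≠ 0)
    (h0 : ∀ e ∈ E, ∑ i, ∑ j, c i j * u e.1 ^ (i : ℕ) * v e.2 ^ (j : ℕ) = 0) :
    E.card ≤ d * (A.card + B.card) := by
  classical
  obtain ⟨i0, j0, hc0⟩ := hc
  set bad := A.filter (fun a => ∑ i, c i j0 * u a ^ (i : ℕ) = 0) with hbad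
  have hbc : bad.card ≤ d := pb_roots d (fun i => c i j0) ⟨i0, hc0⟩ u hu bad
    (fun a ha => (Finset.mem_filter.mp ha).2)
  have hsub : E ⊆ bad ×ˢ B ∪ A.biUnion (fun a => if a ∈ bad then ∅ else
      (E.filter (fun e => e.1 = a))) := by
    intro e he
    have := Finset.mem_product.mp (hE he)
    by_cases hb : e.1 ∈ bad
    · exact Finset.mem_union_left _ (Finset.mem_product.mpr ⟨hb, this.2⟩)
    · refine Finset.mem_union_right _ (Finset.mem_biUnion.mpr ⟨e.1, this.1, ?_⟩)
      rw [if_neg hb]; exact Finset.mem_filter.mpr ⟨he, rfl⟩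
  have hcol : ∀ a ∈ A, (if a ∈ bad then ∅ else (E.filter (fun e => e.1 = a))).card ≤ d := by
    intro a ha
    split_ifs with hb
    · simp
    · have hinj : Set.InjOn Prod.snd (↑(E.filter (fun e => e.1 = a)) : Set (α × β)) := by
        intro x hx y hy hxy
        have h1 := (Finset.mem_filter.mp hx).2
        have h2 := (Finset.mem_filter.mp hy).2
        exact Prod.ext (h1.trans h2.symm) hxy
      rw [← Finset.card_image_of_injOn hinj]
      refine pb_roots d (fun j => ∑ i, c i j * u a ^ (i : ℕ)) ⟨j0, ?_⟩ v hv _ ?_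
      · intro h; exact hb (Finset.mem_filter.mpr ⟨ha, h⟩)
      · intro b hbm
        obtain ⟨e, he, rfl⟩ := Finset.mem_image.mp hbm
        obtain ⟨he1, he2⟩ := Finset.mem_filter.mp he
        have := h0 e he1
        rw [Finset.sum_comm, he2] at this
        simpa [Finset.sum_mul] using this
  calc E.card ≤ _ := Finset.card_le_card hsub
    _ ≤ _ := Finset.card_union_le _ _
    _ ≤ d * B.card + A.card * d := by
        gcongr
        · rw [Finset.card_product]; exact Nat.mul_le_mul_right _ hbc
        · exact Finset.card_biUnion_le_card_mul _ _ _ hcol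
    _ = d * (A.card + B.card) := by ring

lemma sl_det (g : SL(2, ℝ)) : g 0 0 * g 1 1 - g 0 1 * g 1 0 = 1 := by
  have := g.det_coe
  rwa [Matrix.det_fin_two] at this

lemma sl_den (g : SL(2, ℝ)) (a : ℍ) : ((g 1 0 : ℝ) : ℂ) * a + ((g 1 1 : ℝ) : ℂ) ≠ 0 := by
  intro h
  have hd := sl_det g
  have him : (((g 1 0 : ℝ) : ℂ) * a + ((g 1 1 : ℝ) : ℂ)).im = 0 := by rw [h]; simp
  have hre : (((g 1 0 : ℝ) : ℂ) * a + ((g 1 1 : ℝ) : ℂ)).re = 0 := by rw [h]; simp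
  simp at him hre
  rcases him with h1 | h1
  · rw [h1] at hd hre
    simp at hre
    rw [hre] at hd; simp at hd
  · exact a.im_ne_zero h1

lemma sl_coe (g : SL(2, ℝ)) (a : ℍ) : ((g • a : ℍ) : ℂ) =
    (((g 0 0 : ℝ) : ℂ) * a + ((g 0 1 : ℝ) : ℂ)) / (((g 1 0 : ℝ) : ℂ) * a + ((g 1 1 : ℝ) : ℂ)) := by
  rw [UpperHalfPlane.coe_specialLinearGroup_apply]; simp

lemma sl_mul (g : SL(2, ℝ)) {a b : ℍ} (h : g • a = b) :
    (b : ℂ) * (((g 1 0 : ℝ) : ℂ) * a + ((g 1 1 : ℝ) : ℂ)) =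
      ((g 0 0 : ℝ) : ℂ) * a + ((g 0 1 : ℝ) : ℂ) := by
  rw [← h, sl_coe, div_mul_cancel₀ _ (sl_den g a)]

lemma sl_same_of_mul (g g' : SL(2, ℝ)) (ρ : ℂ) (hρ : ρ ≠ 0)
    (h : ∀ i j, ((g' i j : ℝ) : ℂ) = ρ * ((g i j : ℝ) : ℂ)) (z : ℍ) : g • z = g' • z := by
  apply UpperHalfPlane.ext
  rw [sl_coe, sl_coe, h, h, h, h]
  rw [mul_assoc, mul_assoc, ← mul_add, ← mul_add, mul_div_mul_left _ _ hρ]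

lemma sl_two_points (g g' : SL(2, ℝ)) {a a' : ℍ} (hne : a ≠ a') (h1 : g • a = g' • a)
    (h2 : g • a' = g' • a') (z : ℍ) : g • z = g' • z := by
  set k := g⁻¹ * g' with hk
  have e1 : k • a = a := by rw [hk, mul_smul, ← h1, inv_smul_smul]
  have e2 : k • a' = a' := by rw [hk, mul_smul, ← h2, inv_smul_smul]
  have hz : k • z = z := by
    have m1 := sl_mul k e1
    have m2 := sl_mul k e2
    have r1 := congrArg Complex.re m1
    have i1 := congrArg Complex.im m1
    have r2 := congrArg Complex.re m2
    have i2 := congrArg Complex.im m2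
    simp at r1 i1 r2 i2
    have i1' : 2 * k 1 0 * a.re + k 1 1 = k 0 0 := by
      apply mul_right_cancel₀ a.im_ne_zero; linarith
    have i2' : 2 * k 1 0 * a'.re + k 1 1 = k 0 0 := by
      apply mul_right_cancel₀ a'.im_ne_zero; linarith
    have hr : k 1 0 = 0 := by
      by_contra hr
      have hx : a.re = a'.re := by
        apply mul_left_cancel₀ hr; linarith
      have hy : a.im ^ 2 = a'.im ^ 2 := by
        apply mul_left_cancel₀ hr
        rw [← hx] at r2
        linarith
      have hy' : a.im = a'.im := by
        have := (sq_eq_sq₀ a.im_pos.le a'.im_pos.le).mp hy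
        exact this
      exact hne (UpperHalfPlane.ext (Complex.ext hx hy'))
    rw [hr] at i1' r1
    have hq : k 0 1 = 0 := by
      have : k 1 1 = k 0 0 := by linarith
      rw [this] at r1
      simp at r1
      linarith
    have hs : k 1 1 = k 0 0 := by linarith
    have hd := sl_det k
    have h0 : k 0 0 ≠ 0 := by
      intro h0; rw [h0, hr] at hd; simp at hd
    apply UpperHalfPlane.ext
    rw [sl_coe, hr, hq, hs]
    have : ((k 0 0 : ℝ) : ℂ) ≠ 0 := by exact_mod_cast h0
    simp
    field_simp
  rw [hk, mul_smul] at hz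
  rw [inv_smul_eq_iff] at hz
  exact hz.symm

/-- coordinate on the line -/
def slJ (g : SL(2, ℝ)) (a : ℍ) : ℂ := ((g 1 0 : ℝ) : ℂ) * a + ((g 1 1 : ℝ) : ℂ)
def slX (g : SL(2, ℝ)) (a : ℍ) : ℂ := -(starRingEnd ℂ (slJ g a)) / slJ g a
def slM (g : SL(2, ℝ)) (a : ℍ) : ℂ := slJ g a / ((a : ℂ) - starRingEnd ℂ (a : ℂ))

lemma up_sub_conj (a : ℍ) : (a : ℂ) - starRingEnd ℂ (a : ℂ) ≠ 0 := by
  intro h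
  have := congrArg Complex.im h
  simp at this
  have h1 := a.im_pos
  linarith

lemma slM_ne (g : SL(2, ℝ)) (a : ℍ) : slM g a ≠ 0 := div_ne_zero (sl_den g a) (up_sub_conj a)

lemma sl_param (g : SL(2, ℝ)) {a b : ℍ} (h : g • a = b) :
    ((g 0 0 : ℝ) : ℂ) = slM g a * (starRingEnd ℂ (b : ℂ) * slX g a + b) ∧
    -((g 0 1 : ℝ) : ℂ) = slM g a * (a * starRingEnd ℂ (b : ℂ) * slX g a + starRingEnd ℂ (a : ℂ) * b) ∧
    ((g 1 0 : ℝ) : ℂ) = slM g a * (slX g a + 1) ∧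
    -((g 1 1 : ℝ) : ℂ) = slM g a * (a * slX g a + starRingEnd ℂ (a : ℂ)) ∧
    ((a : ℂ) - starRingEnd ℂ (a : ℂ)) * (starRingEnd ℂ (b : ℂ) - b) * slX g a * slM g a ^ 2 = 1 := by
  have m := sl_mul g h
  have mc := congrArg (starRingEnd ℂ) m
  simp only [map_mul, map_add, Complex.conj_ofReal] at mc
  have hd : ((g 0 0 : ℝ) : ℂ) * ((g 1 1 : ℝ) : ℂ) - ((g 0 1 : ℝ) : ℂ) * ((g 1 0 : ℝ) : ℂ) = 1 := by
    exact_mod_cast sl_det g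
  have hj := sl_den g a
  have ha := up_sub_conj a
  have hJ : slJ g a = ((g 1 0 : ℝ) : ℂ) * a + ((g 1 1 : ℝ) : ℂ) := rfl
  have hJc : starRingEnd ℂ (slJ g a) =
      ((g 1 0 : ℝ) : ℂ) * starRingEnd ℂ (a : ℂ) + ((g 1 1 : ℝ) : ℂ) := by
    rw [hJ]; simp
  unfold slM slX
  rw [hJc, hJ]
  generalize ((g 0 0 : ℝ) : ℂ) = p at *
  generalize ((g 0 1 : ℝ) : ℂ) = q at *
  generalize ((g 1 0 : ℝ) : ℂ) = r at *
  generalize ((g 1 1 : ℝ) : ℂ) = s at *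
  generalize starRingEnd ℂ (a : ℂ) = a' at *
  generalize starRingEnd ℂ (b : ℂ) = b' at *
  generalize (a : ℂ) = a at *
  generalize (b : ℂ) = b at *
  refine ⟨?_, ?_, ?_, ?_, ?_⟩
  · field_simp
    linear_combination mc - m
  · field_simp
    linear_combination a * mc - a' * m
  · field_simp
    ring
  · field_simp
    ring
  · field_simp
    linear_combination (-(r * a + s)) * mc + (r * a' + s) * m + (a - a') * hd

lemma slX_inj (g g' : SL(2, ℝ)) {a b : ℍ} (h : g • a = b) (h' : g' • a = b)
    (hx : slX g a = slX g' a) (z : ℍ) : g • z = g' • z := by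
  obtain ⟨p1, p2, p3, p4, -⟩ := sl_param g h
  obtain ⟨q1, q2, q3, q4, -⟩ := sl_param g' h'
  have hm := slM_ne g a
  rw [← hx] at q1 q2 q3 q4
  refine sl_same_of_mul g g' (slM g' a / slM g a) (div_ne_zero (slM_ne g' a) hm) ?_ z
  have p2' := congrArg Neg.neg p2
  have q2' := congrArg Neg.neg q2
  have p4' := congrArg Neg.neg p4
  have q4' := congrArg Neg.neg q4
  rw [neg_neg] at p2' q2' p4' q4'
  intro i j
  fin_cases i <;> fin_cases j
  · show ((g' 0 0 : ℝ) : ℂ) = _ * ((g 0 0 : ℝ) : ℂ)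
    rw [q1, p1]; field_simp
  · show ((g' 0 1 : ℝ) : ℂ) = _ * ((g 0 1 : ℝ) : ℂ)
    rw [q2', p2']; field_simp
  · show ((g' 1 0 : ℝ) : ℂ) = _ * ((g 1 0 : ℝ) : ℂ)
    rw [q3, p3]; field_simp
  · show ((g' 1 1 : ℝ) : ℂ) = _ * ((g 1 1 : ℝ) : ℂ)
    rw [q4', p4']; field_simp

def pbF (t : ℕ) (c : PBJ t → ℂ) (g : SL(2, ℝ)) : ℂ :=
  ∑ x : PBJ t, c x * pbMono ((g 0 0 : ℝ) : ℂ) (-((g 0 1 : ℝ) : ℂ)) ((g 1 0 : ℝ) : ℂ)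
    (-((g 1 1 : ℝ) : ℂ)) (t - 2 * (x.1 : ℕ)) x.2.1 x.2.2

def pbTerm (t : ℕ) (a b : ℍ) (x : PBJ t) : Polynomial ℂ :=
  Polynomial.C ((((a : ℂ) - starRingEnd ℂ (a : ℂ)) * (starRingEnd ℂ (b : ℂ) - b)) ^ (x.1 : ℕ)) *
    pbMono (Polynomial.C (starRingEnd ℂ (b : ℂ)) * Polynomial.X + Polynomial.C (b : ℂ))
      (Polynomial.C (a * starRingEnd ℂ (b : ℂ)) * Polynomial.X +
        Polynomial.C (starRingEnd ℂ (a : ℂ) * b))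
      (Polynomial.C 1 * Polynomial.X + Polynomial.C 1)
      (Polynomial.C (a : ℂ) * Polynomial.X + Polynomial.C (starRingEnd ℂ (a : ℂ)))
      (t - 2 * (x.1 : ℕ)) x.2.1 x.2.2 * Polynomial.X ^ (x.1 : ℕ)

def pbPsi (t : ℕ) (c : PBJ t → ℂ) (a b : ℍ) : Polynomial ℂ :=
  ∑ x : PBJ t, Polynomial.C (c x) * pbTerm t a b x

lemma pbPsi_eval (t : ℕ) (c : PBJ t → ℂ) (a b : ℍ) (y : ℂ) :
    (pbPsi t c a b).eval y = ∑ x : PBJ t, c x * (pbTerm t a b x).eval y := by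
  simp [pbPsi, Polynomial.eval_finsetSum]

lemma pbF_eq (t : ℕ) (c : PBJ t → ℂ) (g : SL(2, ℝ)) {a b : ℍ} (h : g • a = b) :
    pbF t c g = slM g a ^ t * (pbPsi t c a b).eval (slX g a) := by
  obtain ⟨p1, p2, p3, p4, p5⟩ := sl_param g h
  rw [pbPsi_eval, pbF, Finset.mul_sum]
  refine Finset.sum_congr rfl fun x _ => ?_
  rw [p1, p2, p3, p4, pbMono_smul _ _ _ _ _ _ _ _ (by have := x.2.1.2; omega)
    (by have := x.2.2.2; omega)]
  have ht : t = (t - 2 * (x.1 : ℕ)) + 2 * (x.1 : ℕ) := by have := x.1.2; omega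
  have e1 : slM g a ^ t = slM g a ^ (t - 2 * (x.1 : ℕ)) * (slM g a ^ 2) ^ (x.1 : ℕ) := by
    rw [← pow_mul, ← pow_add, ← ht]
  rw [e1]
  have e2 : (((a : ℂ) - starRingEnd ℂ (a : ℂ)) * (starRingEnd ℂ (b : ℂ) - b)) ^ (x.1 : ℕ) *
     slX g a ^ (x.1 : ℕ) * (slM g a ^ 2) ^ (x.1 : ℕ) = 1 := by
    rw [← mul_pow, ← mul_pow, p5, one_pow]
  simp only [pbTerm, Polynomial.eval_mul, Polynomial.eval_C, Polynomial.eval_pow, Polynomial.eval_X]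
  have e3 : ∀ (P Q R S : Polynomial ℂ) (d i j : ℕ) (y : ℂ), (pbMono P Q R S d i j).eval y =
      pbMono (P.eval y) (Q.eval y) (R.eval y) (S.eval y) d i j := by
    intros; simp [pbMono]
  rw [e3]
  simp only [Polynomial.eval_add, Polynomial.eval_mul, Polynomial.eval_C, Polynomial.eval_X, one_mul]
  generalize (pbMono _ _ _ _ _ _ _ : ℂ) = W
  linear_combination (-(c x * slM g a ^ (t - 2 * (x.1 : ℕ)) * W)) * e2

lemma pbMono_deg (P Q R S : Polynomial ℂ) (hP : P.natDegree ≤ 1) (hQ : Q.natDegree ≤ 1)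
    (hR : R.natDegree ≤ 1) (hS : S.natDegree ≤ 1) (d i j : ℕ) (hi : i ≤ d) (hj : j ≤ d) :
    (pbMono P Q R S d i j).natDegree ≤ d := by
  have hp : ∀ (P : Polynomial ℂ) (k : ℕ), P.natDegree ≤ 1 → (P ^ k).natDegree ≤ k := by
    intro P k h
    refine Polynomial.natDegree_pow_le.trans ?_
    calc k * P.natDegree ≤ k * 1 := Nat.mul_le_mul_left _ h
      _ = k := mul_one k
  unfold pbMono
  refine (Polynomial.natDegree_mul_le_of_le (Polynomial.natDegree_mul_le_of_le
    (Polynomial.natDegree_mul_le_of_le (hp _ _ hQ) (hp _ _ hP)) (hp _ _ hS)) (hp _ _ hR)).trans ?_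
  omega

lemma pbPsi_deg (t : ℕ) (c : PBJ t → ℂ) (a b : ℍ) : (pbPsi t c a b).natDegree ≤ t := by
  refine Polynomial.natDegree_sum_le_of_forall_le _ _ fun x _ => ?_
  refine (Polynomial.natDegree_C_mul_le _ _).trans ?_
  have hi : (x.2.1 : ℕ) ≤ t - 2 * (x.1 : ℕ) := by have := x.2.1.2; omega
  have hj : (x.2.2 : ℕ) ≤ t - 2 * (x.1 : ℕ) := by have := x.2.2.2; omega
  have hl := x.1.2
  unfold pbTerm
  refine (Polynomial.natDegree_mul_le_of_le (m := t - 2 * (x.1 : ℕ)) (n := (x.1 : ℕ)) ?_ ?_).trans (by omega)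
  · refine (Polynomial.natDegree_C_mul_le _ _).trans ?_
    exact pbMono_deg _ _ _ _ Polynomial.natDegree_linear_le Polynomial.natDegree_linear_le
      Polynomial.natDegree_linear_le Polynomial.natDegree_linear_le _ _ _ hi hj
  · exact Polynomial.natDegree_X_pow_le _

lemma pbPsi_zero (t : ℕ) (c : PBJ t → ℂ) (hc : c ≠ 0) :
    ∃ d : ℕ, d ≤ t ∧ ∃ c' : Fin (d + 1) → Fin (d + 1) → ℂ, (∃ i j, c' i j ≠ 0) ∧
      ∀ a b : ℍ, pbPsi t c a b = 0 →
        ∑ i, ∑ j, c' i j * (starRingEnd ℂ (a : ℂ)) ^ (i : ℕ) * (b : ℂ) ^ (j : ℕ) = 0 := by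
  classical
  obtain ⟨x0, hx0⟩ := Function.ne_iff.mp hc
  have hex : (Finset.univ.filter (fun l : Fin (t / 2 + 1) => ∃ y, c ⟨l, y⟩ ≠ 0)).Nonempty :=
    ⟨x0.1, by simp only [Finset.mem_filter, Finset.mem_univ, true_and]; exact ⟨x0.2, hx0⟩⟩
  set l := Finset.min' _ hex with hl
  have hlm := (Finset.mem_filter.mp (Finset.min'_mem _ hex)).2
  have hmin : ∀ l' : Fin (t / 2 + 1), l' < l → ∀ y, c ⟨l', y⟩ = 0 := by
    intro l' h y
    by_contra hy
    have : l ≤ l' := Finset.min'_le _ _ (by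
      simp only [Finset.mem_filter, Finset.mem_univ, true_and]; exact ⟨y, hy⟩)
    omega
  rw [← hl] at hlm
  refine ⟨t - 2 * (l : ℕ), Nat.sub_le _ _, fun i j => c ⟨l, (i, j)⟩, ?_, ?_⟩
  · obtain ⟨y, hy⟩ := hlm
    exact ⟨y.1, y.2, hy⟩
  intro a b h
  have h1 := congrArg (fun P => Polynomial.coeff P (l : ℕ)) h
  simp only [pbPsi, Polynomial.finsetSum_coeff, Polynomial.coeff_zero, Polynomial.coeff_C_mul] at h1
  rw [Fintype.sum_sigma] at h1
  rw [Finset.sum_eq_single l] at h1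
  · have hκ : (((a : ℂ) - starRingEnd ℂ (a : ℂ)) * (starRingEnd ℂ (b : ℂ) - b)) ^ (l : ℕ) ≠ 0 := by
      apply pow_ne_zero
      apply mul_ne_zero (up_sub_conj a)
      rw [← neg_sub]; exact neg_ne_zero.mpr (up_sub_conj b)
    apply mul_left_cancel₀ hκ
    rw [mul_zero, ← h1, Fintype.sum_prod_type, Finset.mul_sum]
    refine Finset.sum_congr rfl fun i _ => ?_
    rw [Finset.mul_sum]
    refine Finset.sum_congr rfl fun j _ => ?_
    unfold pbTerm
    simp only
    rw [Polynomial.coeff_mul_X_pow', if_pos le_rfl, Nat.sub_self, Polynomial.coeff_C_mul,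
      Polynomial.coeff_zero_eq_eval_zero]
    simp only [pbMono, Polynomial.eval_mul, Polynomial.eval_pow, Polynomial.eval_add,
      Polynomial.eval_C, Polynomial.eval_X, mul_zero, zero_add, one_pow, mul_one]
    have e1 : (starRingEnd ℂ (a : ℂ)) ^ (i : ℕ) = (starRingEnd ℂ (a : ℂ)) ^ (min (i : ℕ) j) *
      (starRingEnd ℂ (a : ℂ)) ^ ((i : ℕ) - min (i : ℕ) j) := by
      rw [← pow_add]; congr 1; omega
    have e2 : (b : ℂ) ^ (j : ℕ) = (b : ℂ) ^ (min (i : ℕ) j) * (b : ℂ) ^ ((j : ℕ) - min (i : ℕ) j) := by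
      rw [← pow_add]; congr 1; omega
    rw [e1, e2]
    ring
  · intro l' _ hne
    refine Finset.sum_eq_zero fun y _ => ?_
    rcases lt_or_gt_of_ne hne with h' | h'
    · rw [hmin l' h' y, zero_mul]
    · unfold pbTerm
      simp only
      rw [Polynomial.coeff_mul_X_pow', if_neg (by simpa using h'), mul_zero]
  · simp

open Classical in
def pbRich (G : Finset SL(2, ℝ)) (E : Finset (ℍ × ℍ)) (e : ℍ × ℍ) : Finset SL(2, ℝ) :=
  G.filter (fun g => g • e.1 = e.2 ∧ ∃ e' ∈ E, e' ≠ e ∧ g • e'.1 = e'.2)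

lemma pb_core (G : Finset SL(2, ℝ))
    (hG : ∀ g ∈ G, ∀ g' ∈ G, (∀ z : ℍ, g • z = g' • z) → g = g')
    (A B : Finset ℍ) (E : Finset (ℍ × ℍ)) (hE : E ⊆ A ×ˢ B) (hne : E.Nonempty) :
    ∃ e ∈ E, (pbRich G E e).card ≤ 3 * (A.card + B.card) := by
  classical
  by_contra hcon
  push Not at hcon
  set n := A.card + B.card with hn
  have hn1 : 1 ≤ n := by
    obtain ⟨e, he⟩ := hne
    have := Finset.card_pos.mpr ⟨e.1, (Finset.mem_product.mp (hE he)).1⟩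
    omega
  have hR : ∀ e : E, ∃ R : Finset SL(2, ℝ), R ⊆ pbRich G E e ∧ R.card = 3 * n := fun e =>
    Finset.exists_subset_card_eq (hcon e e.2).le
  choose R hRs hRc using hR
  have hmem : ∀ (e : E) (g : SL(2, ℝ)), g ∈ R e → g ∈ G ∧ g • e.1.1 = e.1.2 ∧
      ∃ e' : E, e' ≠ e ∧ g • e'.1.1 = e'.1.2 := by
    intro e g hg
    have := hRs e hg
    simp only [pbRich, Finset.mem_filter] at this
    obtain ⟨h1, h2, e', h3, h4, h5⟩ := this
    exact ⟨h1, h2, ⟨e', h3⟩, fun h => h4 (congrArg Subtype.val h), h5⟩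
  let o : E → SL(2, ℝ) → E := fun e g => if h : g ∈ R e then (hmem e g h).2.2.choose else e
  have ho : ∀ e g, g ∈ R e → o e g ≠ e ∧ g • (o e g).1.1 = (o e g).1.2 := by
    intro e g h
    simp only [o, dif_pos h]
    exact (hmem e g h).2.2.choose_spec
  have hoinj : ∀ e, Set.InjOn (o e) (R e) := by
    intro e g hg g' hg' heq
    have hg := Finset.mem_coe.mp hg
    have hg' := Finset.mem_coe.mp hg'
    obtain ⟨a1, a2, -⟩ := hmem e g hg
    obtain ⟨b1, b2, -⟩ := hmem e g' hg'
    obtain ⟨c1, c2⟩ := ho e g hg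
    obtain ⟨d1, d2⟩ := ho e g' hg'
    rw [← heq] at d2
    refine hG g a1 g' b1 (sl_two_points g g' (a := e.1.1) (a' := (o e g).1.1) ?_ (a2.trans b2.symm)
      (c2.trans d2.symm))
    intro h
    apply c1
    apply Subtype.ext
    refine Prod.ext h.symm ?_
    rw [← c2, ← a2, h]
  obtain ⟨σ, hσ⟩ := PA_exists_order (fun e : E => (R e).image (o e)) (3 * n) ((E.card - 1) / n)
    (by
      intro e h
      obtain ⟨g, hg, h'⟩ := Finset.mem_image.mp h
      exact (ho e g hg).1 h')
    (by
      intro e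
      rw [Finset.card_image_of_injOn (hoinj e), hRc])
  set t := (E.card - 1) / n with ht
  have hm : 1 ≤ E.card := hne.card_pos
  have ht1 : t * n ≤ E.card - 1 := Nat.div_mul_le_self _ _
  have ht2 : E.card ≤ t * n + n := by
    have := Nat.lt_div_mul_add (a := E.card - 1) (b := n) (by omega)
    rw [← ht] at this
    omega
  let Bk : E → Finset SL(2, ℝ) := fun e => (R e).filter (fun g => σ (o e g) < σ e)
  have hBk : ∀ e, (((R e).image (o e)).filter (fun y => σ y < σ e)).card = (Bk e).card := by
    intro e
    rw [Finset.filter_image, Finset.card_image_of_injOn]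
    exact (hoinj e).mono (by intro x hx; exact (Finset.mem_filter.mp hx).1)
  let Xs : E → Finset ℂ := fun e => (Bk e).image (fun g => slX g e.1.1)
  have hXs : ∀ e, (Xs e).card = (Bk e).card := by
    intro e
    apply Finset.card_image_of_injOn
    intro g hg g' hg' hx
    have hg := (Finset.mem_filter.mp (Finset.mem_coe.mp hg)).1
    have hg' := (Finset.mem_filter.mp (Finset.mem_coe.mp hg')).1
    obtain ⟨a1, a2, -⟩ := hmem e g hg
    obtain ⟨b1, b2, -⟩ := hmem e g' hg'
    exact hG g a1 g' b1 (slX_inj g g' a2 b2 hx)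
  have hZ : ∀ e, ∃ Z : Finset ℂ, Xs e ⊆ Z ∧ Z.card = max (t + 1) (Bk e).card := by
    intro e
    exact Infinite.exists_superset_card_eq _ _ (by rw [hXs]; exact le_max_right _ _)
  choose Z hZ1 hZ2 using hZ
  have hYc : ∀ e, (Z e \ Xs e).card = t + 1 - (Bk e).card := by
    intro e
    rw [Finset.card_sdiff_of_subset (hZ1 e), hZ2, hXs]; omega
  -- linear map
  let Lm : (PBJ t → ℂ) →ₗ[ℂ] ((Σ e : E, {y // y ∈ Z e \ Xs e}) → ℂ) :=
    { toFun := fun c ey => ∑ x, c x * (pbTerm t ey.1.1.1 ey.1.1.2 x).eval (ey.2 : ℂ)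
      map_add' := by
        intro c c'; funext ey; simp [add_mul, Finset.sum_add_distrib]
      map_smul' := by
        intro r c; funext ey; simp [Finset.mul_sum, mul_assoc] }
  have hker : LinearMap.ker Lm ≠ ⊥ := by
    apply LinearMap.ker_ne_bot_of_finrank_lt
    rw [Module.finrank_fintype_fun_eq_card, Module.finrank_fintype_fun_eq_card, Fintype.card_sigma]
    simp only [Fintype.card_coe, hYc]
    simp only [hBk, Fintype.card_coe] at hσ
    have hc := pb_card t
    by_contra hlt
    push Not at hlt
    generalize (∑ e : E, (t + 1 - (Bk e).card)) = s at *
    generalize Fintype.card (PBJ t) = q at *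
    have h1 : (t + 1) * (t + 2) * ((3 * n + 1) * (t + 3)) ≤ (t + 1) * (t + 2) * (3 * E.card) := by
      nlinarith [Nat.mul_le_mul_left (3 * n + 1) hlt]
    have h2 := Nat.le_of_mul_le_mul_left h1 (by positivity)
    nlinarith
  obtain ⟨c, hc, hc0⟩ := Submodule.exists_mem_ne_zero_of_ne_bot hker
  rw [LinearMap.mem_ker] at hc
  have hext : ∀ (e : E), ∀ y ∈ Z e \ Xs e, (pbPsi t c e.1.1 e.1.2).eval y = 0 := by
    intro e y hy
    have := congrFun hc ⟨e, ⟨y, hy⟩⟩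
    rw [pbPsi_eval]
    simpa [Lm] using this
  have hvan : ∀ (k : ℕ) (e : E), (σ e : ℕ) = k → pbPsi t c e.1.1 e.1.2 = 0 := by
    intro k
    induction k using Nat.strong_induction_on with
    | _ k ih =>
      intro e hk
      refine Polynomial.eq_zero_of_natDegree_lt_card_of_eval_eq_zero' _ (Z e) ?_ ?_
      · intro y hy
        by_cases hyX : y ∈ Xs e
        · obtain ⟨g, hg, rfl⟩ := Finset.mem_image.mp hyX
          obtain ⟨hgR, hlt⟩ := Finset.mem_filter.mp hg
          have h0 := ih (σ (o e g)) (by rw [← hk]; exact hlt) (o e g) rfl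
          have hF := pbF_eq t c g (ho e g hgR).2
          rw [h0, Polynomial.eval_zero, mul_zero] at hF
          have hF' := pbF_eq t c g (hmem e g hgR).2.1
          rw [hF] at hF'
          exact (mul_eq_zero.mp hF'.symm).resolve_left (pow_ne_zero _ (slM_ne _ _))
        · exact hext e y (Finset.mem_sdiff.mpr ⟨hy, hyX⟩)
      · rw [hZ2]
        have := pbPsi_deg t c e.1.1 e.1.2
        omega
  obtain ⟨d, hd, c', hc', hall⟩ := pbPsi_zero t c hc0
  have hfin := pb_sz (fun a : ℍ => starRingEnd ℂ (a : ℂ)) (fun b : ℍ => (b : ℂ))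
    (fun a a' h => UpperHalfPlane.ext ((starRingEnd ℂ).injective h))
    (fun a a' h => UpperHalfPlane.ext h) A B E hE d c' hc'
    (fun e he => hall e.1 e.2 (hvan _ ⟨e, he⟩ rfl))
  have : d * n ≤ t * n := Nat.mul_le_mul_right _ hd
  rw [← hn] at hfin
  omega

lemma pb_main (G : Finset SL(2, ℝ))
    (hG : ∀ g ∈ G, ∀ g' ∈ G, (∀ z : ℍ, g • z = g' • z) → g = g')
    (A B : Finset ℍ) (E : Finset (ℍ × ℍ)) (hE : E ⊆ A ×ˢ B) :
    ∑ e ∈ E, (pbRich G E e).card ≤ 6 * (A.card + B.card) * E.card := by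
  classical
  induction hk : E.card generalizing E with
  | zero =>
    rw [Finset.card_eq_zero.mp hk]; simp
  | succ k ih =>
    obtain ⟨e, he, hle⟩ := pb_core G hG A B E hE (Finset.card_pos.mp (by omega))
    have hk' : (E.erase e).card = k := by rw [Finset.card_erase_of_mem he]; omega
    have h1 := ih (E.erase e) ((Finset.erase_subset _ _).trans hE) hk'
    rw [← Finset.add_sum_erase E _ he]
    -- each rich point of e' in E is rich in E.erase e unless in e
    have h2 : ∀ e' ∈ E.erase e, (pbRich G E e').card ≤ (pbRich G (E.erase e) e').card +
        ((pbRich G E e).filter (fun g => g • e'.1 = e'.2 ∧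
          ¬ ∃ e2 ∈ E.erase e, e2 ≠ e' ∧ g • e2.1 = e2.2)).card := by
      intro e' he'
      refine (Finset.card_le_card ?_).trans (Finset.card_union_le _ _)
      intro g hg
      simp only [pbRich, Finset.mem_filter, Finset.mem_union] at hg ⊢
      obtain ⟨g1, g2, e2, g3, g4, g5⟩ := hg
      by_cases hx : ∃ e2 ∈ E.erase e, e2 ≠ e' ∧ g • e2.1 = e2.2
      · left; exact ⟨g1, g2, hx⟩
      · right
        have : e2 = e := by
          by_contra hne
          exact hx ⟨e2, Finset.mem_erase.mpr ⟨hne, g3⟩, g4, g5⟩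
        subst this
        exact ⟨⟨g1, g5, e', Finset.mem_of_mem_erase he', Finset.ne_of_mem_erase he', g2⟩, g2, hx⟩
    have h3 : ∑ e' ∈ E.erase e, ((pbRich G E e).filter (fun g => g • e'.1 = e'.2 ∧
          ¬ ∃ e2 ∈ E.erase e, e2 ≠ e' ∧ g • e2.1 = e2.2)).card ≤ (pbRich G E e).card := by
      rw [← Finset.card_biUnion]
      · refine Finset.card_le_card ?_
        intro g hg
        obtain ⟨e', _, h⟩ := Finset.mem_biUnion.mp hg
        exact (Finset.mem_filter.mp h).1
      · intro x hx y hy hxy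
        rw [Function.onFun, Finset.disjoint_left]
        intro g hgx hgy
        have a := (Finset.mem_filter.mp hgx).2
        have b := (Finset.mem_filter.mp hgy).2
        exact b.2 ⟨x, hx, hxy, a.1⟩
    have h4 := Finset.sum_le_sum h2
    rw [Finset.sum_add_distrib] at h4
    nlinarith

def pcD (n : ℕ) (z : ℂ) : ℤ × ℤ := (⌊(2 : ℝ) ^ n * z.re⌋, ⌊(2 : ℝ) ^ n * z.im⌋)

lemma pcD_succ (n : ℕ) (z : ℂ) : pcD n z = ((pcD (n + 1) z).1 / 2, (pcD (n + 1) z).2 / 2) := by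
  have h : ∀ x : ℝ, ⌊(2 : ℝ) ^ n * x⌋ = ⌊(2 : ℝ) ^ (n + 1) * x⌋ / 2 := by
    intro x
    have := Int.floor_div_natCast ((2 : ℝ) ^ (n + 1) * x) 2
    push_cast at this
    rw [← this]; congr 1; rw [pow_succ]; ring
  simp only [pcD]
  rw [h, h]

lemma pcD_mono {n m : ℕ} (h : n ≤ m) {z w : ℂ} (e : pcD m z = pcD m w) : pcD n z = pcD n w := by
  induction m, h using Nat.le_induction with
  | base => exact e
  | succ m _ ih => apply ih; rw [pcD_succ m z, pcD_succ m w, e]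

lemma pcD_diff {n : ℕ} {z w : ℂ} (e : pcD n z = pcD n w) :
    (2 : ℝ) ^ n * |z.re - w.re| < 1 ∧ (2 : ℝ) ^ n * |z.im - w.im| < 1 := by
  have hp : (0 : ℝ) < 2 ^ n := by positivity
  simp only [pcD, Prod.mk.injEq] at e
  constructor
  · have := Int.abs_sub_lt_one_of_floor_eq_floor e.1
    rwa [← mul_sub, abs_mul, abs_of_pos hp] at this
  · have := Int.abs_sub_lt_one_of_floor_eq_floor e.2
    rwa [← mul_sub, abs_mul, abs_of_pos hp] at this

lemma pcD_dist {n : ℕ} {z w : ℂ} (e : pcD n z = pcD n w) : dist z w < 2 * (1 / 2) ^ n := by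
  have hp : (0 : ℝ) < 2 ^ n := by positivity
  obtain ⟨h1, h2⟩ := pcD_diff e
  have h3 := Complex.norm_le_abs_re_add_abs_im (z - w)
  rw [dist_eq_norm]
  have h4 : (2 : ℝ) ^ n * ‖z - w‖ < 2 := by
    simp at h3
    nlinarith
  rw [one_div, inv_pow]
  rw [← div_eq_mul_inv, lt_div_iff₀ hp]; linarith

lemma pcD_sep {z w : ℂ} (h : z ≠ w) : ∃ M, ∀ m ≥ M, pcD m z ≠ pcD m w := by
  have hd : 0 < dist z w := dist_pos.mpr h
  obtain ⟨M, hM⟩ := exists_pow_lt_of_lt_one (show (0 : ℝ) < dist z w / 2 by linarith)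
    (show (1 / 2 : ℝ) < 1 by norm_num)
  refine ⟨M, fun m hm e => ?_⟩
  have h1 := pcD_dist (pcD_mono hm e)
  linarith

lemma pcD_sep_finset (P : Finset ℂ) : ∃ M, ∀ m ≥ M, ∀ z ∈ P, ∀ w ∈ P, pcD m z = pcD m w → z = w := by
  classical
  have : ∀ p : ℂ × ℂ, ∃ M, ∀ m ≥ M, pcD m p.1 = pcD m p.2 → p.1 = p.2 := by
    intro p
    by_cases h : p.1 = p.2
    · exact ⟨0, fun _ _ _ => h⟩
    · obtain ⟨M, hM⟩ := pcD_sep h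
      exact ⟨M, fun m hm e => absurd e (hM m hm)⟩
  choose M hM using this
  refine ⟨(P ×ˢ P).sup M, fun m hm z hz w hw e => hM (z, w) m ?_ e⟩
  exact le_trans (Finset.le_sup (f := M) (Finset.mk_mem_product hz hw)) hm

def pcQ (n : ℕ) (u : ℤ × ℤ) : Set ℂ := {z | pcD n z = u}

def pcCell (C : Set ℂ) : Prop := ∃ n u m v, n ≤ m ∧ C = pcQ n u \ pcQ m v

def pcCh (u : ℤ × ℤ) : Finset (ℤ × ℤ) :=
  ({2 * u.1, 2 * u.1 + 1} : Finset ℤ) ×ˢ ({2 * u.2, 2 * u.2 + 1} : Finset ℤ)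

lemma pcCh_card (u : ℤ × ℤ) : (pcCh u).card ≤ 4 := by
  rw [pcCh, Finset.card_product]
  exact Nat.mul_le_mul Finset.card_le_two Finset.card_le_two

lemma pcCh_mem (n : ℕ) (z : ℂ) (u : ℤ × ℤ) : pcD (n + 1) z ∈ pcCh u ↔ pcD n z = u := by
  rw [pcD_succ n z, pcCh, Prod.ext_iff]
  simp only [Finset.mem_product, Finset.mem_insert, Finset.mem_singleton]
  constructor
  · rintro ⟨h1, h2⟩; constructor <;> omega
  · rintro ⟨h1, h2⟩; constructor <;> omega

def pcPhi (T N : ℕ) : ℕ := if T < N then 8 * N - 4 * T else 0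

lemma pc_phi_sum {ι : Type*} (s : Finset ι) (f : ι → ℕ) (T N : ℕ) (hT : T < N)
    (h1 : ∑ i ∈ s, f i ≤ N) (h2 : ∀ i ∈ s, f i ≤ N - T) :
    ∑ i ∈ s, pcPhi T (f i) + 8 * T ≤ 8 * N := by
  classical
  have e1 : ∑ i ∈ s, pcPhi T (f i) = ∑ i ∈ s.filter (fun i => T < f i), (8 * f i - 4 * T) := by
    rw [Finset.sum_filter]; rfl
  rw [e1]
  set H := s.filter (fun i => T < f i) with hH
  have h3 : ∑ i ∈ H, (8 * f i - 4 * T) + 4 * T * H.card = 8 * ∑ i ∈ H, f i := by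
    rw [Finset.mul_sum, mul_comm (4 * T), show H.card * (4 * T) = ∑ i ∈ H, 4 * T by rw [Finset.sum_const, smul_eq_mul], ← Finset.sum_add_distrib]
    refine Finset.sum_congr rfl fun i hi => ?_
    have := (Finset.mem_filter.mp hi).2
    omega
  have h4 : ∑ i ∈ H, f i ≤ N := (Finset.sum_le_sum_of_subset (Finset.filter_subset _ _)).trans h1
  rcases Nat.lt_or_ge H.card 2 with h | h
  · interval_cases hc : H.card
    · rw [Finset.card_eq_zero] at hc
      rw [hc]; simp; omega
    · rw [Finset.card_eq_one] at hc
      obtain ⟨i, hi⟩ := hc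
      rw [hi, Finset.sum_singleton]
      have : i ∈ H := by rw [hi]; simp
      have := h2 i (Finset.mem_filter.mp this).1
      omega
  · have : 4 * T * 2 ≤ 4 * T * H.card := Nat.mul_le_mul_left _ h
    omega

lemma pcQ_sub {n m : ℕ} (h : n ≤ m) {z : ℂ} {u v : ℤ × ℤ} (hu : pcD n z = u) (hv : pcD m z = v) :
    pcQ m v ⊆ pcQ n u := by
  intro w hw
  have hw : pcD m w = v := hw
  show pcD n w = u
  rw [← hu]
  exact pcD_mono h (hw.trans hv.symm)

open Classical in
lemma pc_part (T : ℕ) (hT : 1 ≤ T) (N : ℕ) : ∀ (P : Finset ℂ) (n : ℕ) (u : ℤ × ℤ), P.card = N →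
    (∀ z ∈ P, pcD n z = u) → ∃ S : Finset (Set ℂ), (∀ C ∈ S, pcCell C ∧ C ⊆ pcQ n u) ∧
      (∀ C ∈ S, ∀ C' ∈ S, C ≠ C' → Disjoint C C') ∧ (∀ z ∈ P, ∃ C ∈ S, z ∈ C) ∧
      (∀ C ∈ S, (P.filter (fun z => z ∈ C)).card ≤ T) ∧ T * S.card ≤ T + pcPhi T N := by
  induction N using Nat.strong_induction_on with
  | _ N ih =>
  intro P n u hP hu
  by_cases hTN : N ≤ T
  · refine ⟨{pcQ n u}, ?_, ?_, ?_, ?_, ?_⟩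
    · intro C hC
      rw [Finset.mem_singleton.mp hC]
      refine ⟨⟨n, u, n, (u.1 + 1, u.2), le_rfl, ?_⟩, subset_rfl⟩
      ext z
      simp only [pcQ, Set.mem_sdiff, Set.mem_ofPred_eq]
      constructor
      · intro h
        refine ⟨h, fun h' => ?_⟩
        have := congrArg Prod.fst (h.symm.trans h')
        simp at this
      · exact fun h => h.1
    · intro C hC C' hC' hne
      exact absurd ((Finset.mem_singleton.mp hC).trans (Finset.mem_singleton.mp hC').symm) hne
    · intro z hz; exact ⟨_, Finset.mem_singleton_self _, hu z hz⟩
    · intro C _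
      exact (Finset.card_filter_le _ _).trans (by omega)
    · simp
  push Not at hTN
  let W : ℕ → Prop := fun m => ∃ v, N - T < (P.filter (fun z => pcD m z = v)).card
  have hWn : W n := by
    refine ⟨u, ?_⟩
    rw [Finset.filter_true_of_mem hu]; omega
  have hex : ∃ k, ¬ W (n + k + 1) := by
    obtain ⟨M, hM⟩ := pcD_sep_finset P
    refine ⟨M, ?_⟩
    rintro ⟨v, hv⟩
    have : (P.filter (fun z => pcD (n + M + 1) z = v)).card ≤ 1 := by
      rw [Finset.card_le_one]
      intro a ha b hb
      rw [Finset.mem_filter] at ha hb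
      exact hM _ (by omega) a ha.1 b hb.1 (ha.2.trans hb.2.symm)
    omega
  set k := Nat.find hex with hk
  have hk1 : ¬ W (n + k + 1) := Nat.find_spec hex
  have hk2 : W (n + k) := by
    rcases Nat.eq_zero_or_pos k with h0 | h0
    · rw [h0]; exact hWn
    · have := Nat.find_min hex (m := k - 1) (by omega)
      push Not at this
      rwa [show n + (k - 1) + 1 = n + k by omega] at this
  obtain ⟨v, hv⟩ := hk2
  have hk1' : ∀ c, (P.filter (fun z => pcD (n + k + 1) z = c)).card ≤ N - T := by
    intro c
    by_contra h
    exact hk1 ⟨c, by omega⟩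
  obtain ⟨z0, hz0⟩ : (P.filter (fun z => pcD (n + k) z = v)).Nonempty := by
    rw [← Finset.card_pos]; omega
  rw [Finset.mem_filter] at hz0
  have hRQ : pcQ (n + k) v ⊆ pcQ n u := pcQ_sub (by omega) (hu z0 hz0.1) hz0.2
  have hrec := fun c : ℤ × ℤ => ih (P.filter (fun z => pcD (n + k + 1) z = c)).card
    (by have := hk1' c; omega) (P.filter (fun z => pcD (n + k + 1) z = c)) (n + k + 1) c rfl
    (fun z hz => (Finset.mem_filter.mp hz).2)
  choose S hS1 hS2 hS3 hS4 hS5 using hrec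
  have hchR : ∀ c ∈ pcCh v, pcQ (n + k + 1) c ⊆ pcQ (n + k) v := by
    intro c hc w hw
    have hw : pcD (n + k + 1) w = c := hw
    exact (pcCh_mem (n + k) w v).mp (hw ▸ hc)
  refine ⟨insert (pcQ n u \ pcQ (n + k) v) ((pcCh v).biUnion S), ?_, ?_, ?_, ?_, ?_⟩
  · intro C hC
    rcases Finset.mem_insert.mp hC with rfl | hC
    · exact ⟨⟨n, u, n + k, v, by omega, rfl⟩, Set.sdiff_subset⟩
    · obtain ⟨c, hc, hC⟩ := Finset.mem_biUnion.mp hC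
      exact ⟨(hS1 c C hC).1, ((hS1 c C hC).2.trans (hchR c hc)).trans hRQ⟩
  · have key : ∀ C ∈ (pcCh v).biUnion S, Disjoint (pcQ n u \ pcQ (n + k) v) C := by
      intro C hC
      obtain ⟨c, hc, hC⟩ := Finset.mem_biUnion.mp hC
      have := (hS1 c C hC).2.trans (hchR c hc)
      exact Set.disjoint_left.mpr fun w hw hw' => hw.2 (this hw')
    intro C hC C' hC' hne
    rcases Finset.mem_insert.mp hC with rfl | hC
    · rcases Finset.mem_insert.mp hC' with rfl | hC'
      · exact absurd rfl hne
      · exact key C' hC'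
    · rcases Finset.mem_insert.mp hC' with rfl | hC'
      · exact (key C hC).symm
      · obtain ⟨c, hc, hC⟩ := Finset.mem_biUnion.mp hC
        obtain ⟨c', hc', hC'⟩ := Finset.mem_biUnion.mp hC'
        by_cases hcc : c = c'
        · subst hcc; exact hS2 c C hC C' hC' hne
        · refine Set.disjoint_left.mpr fun w hw hw' => hcc ?_
          have h1 : pcD (n + k + 1) w = c := (hS1 c C hC).2 hw
          have h2 : pcD (n + k + 1) w = c' := (hS1 c' C' hC').2 hw'
          exact h1.symm.trans h2
  · intro z hz
    by_cases h : pcD (n + k) z = v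
    · obtain ⟨C, hC, hzC⟩ := hS3 (pcD (n + k + 1) z) z (Finset.mem_filter.mpr ⟨hz, rfl⟩)
      exact ⟨C, Finset.mem_insert_of_mem (Finset.mem_biUnion.mpr
        ⟨_, (pcCh_mem (n + k) z v).mpr h, hC⟩), hzC⟩
    · exact ⟨_, Finset.mem_insert_self _ _, hu z hz, h⟩
  · intro C hC
    rcases Finset.mem_insert.mp hC with rfl | hC
    · have h1 : (P.filter (fun z => z ∈ pcQ n u \ pcQ (n + k) v)).card +
          (P.filter (fun z => pcD (n + k) z = v)).card ≤ P.card := by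
        rw [← Finset.card_union_of_disjoint]
        · exact Finset.card_le_card (Finset.union_subset (Finset.filter_subset _ _) (Finset.filter_subset _ _))
        · rw [Finset.disjoint_left]
          intro w h1 h2
          exact (Finset.mem_filter.mp h1).2.2 (Finset.mem_filter.mp h2).2
      have h2 : (P.filter (fun z => z ∈ pcQ n u \ pcQ (n + k) v)).card ≤ T := by omega
      convert h2
    · obtain ⟨c, hc, hC⟩ := Finset.mem_biUnion.mp hC
      refine le_trans (Finset.card_le_card ?_) (hS4 c C hC)
      intro w hw
      rw [Finset.mem_filter] at hw
      exact Finset.mem_filter.mpr ⟨Finset.mem_filter.mpr ⟨hw.1, (hS1 c C hC).2 hw.2⟩, hw.2⟩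
  · have h1 : (insert (pcQ n u \ pcQ (n + k) v) ((pcCh v).biUnion S)).card ≤
        ∑ c ∈ pcCh v, (S c).card + 1 :=
      (Finset.card_insert_le _ _).trans (Nat.add_le_add_right Finset.card_biUnion_le _)
    have h2 : T * ∑ c ∈ pcCh v, (S c).card ≤ 4 * T +
        ∑ c ∈ pcCh v, pcPhi T (P.filter (fun z => pcD (n + k + 1) z = c)).card := by
      rw [Finset.mul_sum]
      refine (Finset.sum_le_sum fun c _ => hS5 c).trans ?_
      rw [Finset.sum_add_distrib, Finset.sum_const, smul_eq_mul]
      gcongr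
      exact pcCh_card v
    have h3 := pc_phi_sum (pcCh v) (fun c => (P.filter (fun z => pcD (n + k + 1) z = c)).card) T N hTN
      (by
        rw [← Finset.card_biUnion]
        · rw [← hP]
          refine Finset.card_le_card ?_
          intro w hw
          obtain ⟨c, _, hw⟩ := Finset.mem_biUnion.mp hw
          exact (Finset.mem_filter.mp hw).1
        · intro c _ c' _ hne
          rw [Function.onFun, Finset.disjoint_left]
          intro w hw hw'
          exact hne ((Finset.mem_filter.mp hw).2.symm.trans (Finset.mem_filter.mp hw').2))
      (fun c _ => hk1' c)
    have h4 := Nat.mul_le_mul_left T h1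
    rw [mul_add, mul_one] at h4
    simp only [pcPhi, if_pos hTN] at h3 ⊢
    simp only [pcPhi] at h2
    omega

def pdThick (ε M : ℝ) (C : Set ℂ) : Prop := ∀ z ∈ C, ∀ z' ∈ C, ∀ t : ℝ, 0 < t → t ≤ dist z z' →
  ∃ w, Metric.ball w (ε * t) ⊆ C ∧ dist w z ≤ M * t

lemma pc_center (l : ℕ) (k : ℤ × ℤ) : ∃ w : ℂ, ∀ y ∈ Metric.ball w ((1 / 4) * (1 / 2) ^ l),
    pcD (l + 1) y = k := by
  have hp : (0 : ℝ) < 2 ^ (l + 1) := by positivity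
  refine ⟨⟨(k.1 + 1 / 2) / 2 ^ (l + 1), (k.2 + 1 / 2) / 2 ^ (l + 1)⟩, fun y hy => ?_⟩
  rw [Metric.mem_ball, dist_eq_norm] at hy
  have h1 := (Complex.abs_re_le_norm _).trans_lt hy
  have h2 := (Complex.abs_im_le_norm _).trans_lt hy
  simp only [Complex.sub_re, Complex.sub_im] at h1 h2
  have hq : (1 / 4 : ℝ) * (1 / 2) ^ l = 1 / 2 / 2 ^ (l + 1) := by
    rw [pow_succ, one_div_pow]; field_simp; norm_num
  rw [hq] at h1 h2
  have key : ∀ (x : ℝ) (j : ℤ), |x - (j + 1 / 2) / 2 ^ (l + 1)| < 1 / 2 / 2 ^ (l + 1) →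
      ⌊(2 : ℝ) ^ (l + 1) * x⌋ = j := by
    intro x j h
    rw [lt_div_iff₀ hp, ← abs_of_pos hp, ← abs_mul, abs_of_pos hp, sub_mul,
      div_mul_cancel₀ _ hp.ne', abs_lt] at h
    rw [Int.floor_eq_iff]
    constructor <;> linarith [h.1, h.2]
  exact Prod.ext (key _ _ h1) (key _ _ h2)

lemma pc_thick (C : Set ℂ) (hC : pcCell C) : pdThick (1 / 16) 1 C := by
  obtain ⟨n, u0, m, v, hnm, rfl⟩ := hC
  intro z hz z' hz' t ht htd
  have hzn : pcD n z = u0 := hz.1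
  have hzn' : pcD n z' = u0 := hz'.1
  have hzm : pcD m z ≠ v := hz.2
  have hd := pcD_dist (hzn.trans hzn'.symm)
  have hex : ∃ l : ℕ, (1 / 2 : ℝ) ^ l ≤ t / 2 := by
    obtain ⟨l, hl⟩ := exists_pow_lt_of_lt_one (show (0 : ℝ) < t / 2 by linarith)
      (show (1 / 2 : ℝ) < 1 by norm_num)
    exact ⟨l, hl.le⟩
  classical
  set l := Nat.find hex with hl
  have hl1 : (1 / 2 : ℝ) ^ l ≤ t / 2 := Nat.find_spec hex
  have hln : n < l := by
    by_contra h
    push Not at h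
    have : (1 / 2 : ℝ) ^ n ≤ (1 / 2) ^ l := pow_le_pow_of_le_one (by norm_num) (by norm_num) h
    linarith
  have hl2 : t / 4 < (1 / 2 : ℝ) ^ l := by
    have := Nat.find_min hex (m := l - 1) (by omega)
    push Not at this
    have e : (1 / 2 : ℝ) ^ l = (1 / 2) ^ (l - 1) * (1 / 2) := by
      rw [← pow_succ]; congr 1; omega
    rw [e]; linarith
  -- choose the child
  have hch : ∃ k ∈ pcCh (pcD l z), ∀ y, pcD (l + 1) y = k → pcD m y ≠ v := by
    rcases Nat.lt_or_ge l m with hlm | hlm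
    · by_contra hcon
      push Not at hcon
      obtain ⟨y0, a0, b0⟩ := hcon (2 * (pcD l z).1, 2 * (pcD l z).2) (by simp [pcCh])
      obtain ⟨y1, a1, b1⟩ := hcon (2 * (pcD l z).1 + 1, 2 * (pcD l z).2) (by simp [pcCh])
      have := pcD_mono (show l + 1 ≤ m by omega) (b0.trans b1.symm)
      rw [a0, a1] at this
      have := congrArg Prod.fst this
      simp at this
    · refine ⟨(2 * (pcD l z).1, 2 * (pcD l z).2), by simp [pcCh], fun y hy h => hzm ?_⟩
      have h1 : pcD l y = pcD l z := (pcCh_mem l y _).mp (by rw [hy]; simp [pcCh])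
      rw [← h]
      exact (pcD_mono hlm h1).symm
  obtain ⟨k, hk1, hk2⟩ := hch
  obtain ⟨w, hw⟩ := pc_center l k
  refine ⟨w, ?_, ?_⟩
  · intro y hy
    have hy1 : pcD (l + 1) y = k := hw y (Metric.ball_subset_ball (by linarith) hy)
    have hy2 : pcD l y = pcD l z := (pcCh_mem l y _).mp (by rw [hy1]; exact hk1)
    exact ⟨(pcD_mono hln.le hy2).trans hzn, hk2 y hy1⟩
  · have hy1 : pcD (l + 1) w = k := hw w (Metric.mem_ball_self (by positivity))
    have hy2 : pcD l w = pcD l z := (pcCh_mem l w _).mp (by rw [hy1]; exact hk1)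
    have := pcD_dist hy2
    linarith

lemma pdThick_mono {ε M ε' M' : ℝ} {C : Set ℂ} (h : pdThick ε M C) (h1 : ε' ≤ ε) (h2 : M ≤ M') :
    pdThick ε' M' C := by
  intro z hz z' hz' t ht htd
  obtain ⟨w, hw1, hw2⟩ := h z hz z' hz' t ht htd
  exact ⟨w, (Metric.ball_subset_ball (by gcongr)).trans hw1, hw2.trans (by gcongr)⟩

lemma pd_sim {ε M : ℝ} {C : Set ℂ} (h : pdThick ε M C) (α β : ℂ) (hα : α ≠ 0) :
    pdThick ε M ((fun z => α * z + β) '' C) := by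
  have hα' : 0 < ‖α‖ := norm_pos_iff.mpr hα
  have hd : ∀ a b : ℂ, dist (α * a + β) (α * b + β) = ‖α‖ * dist a b := by
    intro a b
    rw [dist_add_right, dist_eq_norm, ← mul_sub, norm_mul, dist_eq_norm]
  rintro _ ⟨z, hz, rfl⟩ _ ⟨z', hz', rfl⟩ t ht htd
  simp only [hd] at htd
  obtain ⟨w, hw1, hw2⟩ := h z hz z' hz' (t / ‖α‖) (by positivity) (by
    rw [div_le_iff₀ hα']; linarith)
  refine ⟨α * w + β, ?_, ?_⟩
  · intro y hy
    refine ⟨(y - β) / α, hw1 ?_, by field_simp; ring⟩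
    have e : y = α * ((y - β) / α) + β := by field_simp; ring
    rw [Metric.mem_ball, e, hd] at hy
    rw [Metric.mem_ball, ← mul_div_assoc, lt_div_iff₀ hα']; linarith
  · rw [hd]
    have := mul_le_mul_of_nonneg_left hw2 hα'.le
    calc _ ≤ _ := this
      _ = _ := by field_simp

lemma pd_inv_dist {a b : ℂ} (ha : a ≠ 0) (hb : b ≠ 0) :
    dist a⁻¹ b⁻¹ * (‖a‖ * ‖b‖) = dist a b := by
  rw [dist_inv_inv₀ ha hb, div_mul_cancel₀]
  exact mul_ne_zero (norm_ne_zero_iff.mpr ha) (norm_ne_zero_iff.mpr hb)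

lemma pd_inv {ε : ℝ} {C : Set ℂ} (h0 : 0 < ε) (h1 : ε ≤ 1) (h : pdThick ε 1 C) :
    pdThick (ε / 128) (4 / ε) ((fun z => z⁻¹) '' (C \ {0})) := by
  rintro _ ⟨z, ⟨hz, hz0⟩, rfl⟩ _ ⟨z', ⟨hz', hz0'⟩, rfl⟩ s hs hsd
  have hz0 : z ≠ 0 := hz0
  have hz0' : z' ≠ 0 := hz0'
  have hε : 4 ≤ 4 / ε := by rw [le_div_iff₀ h0]; linarith
  set δ := ‖z‖ with hδ
  have hδ0 : 0 < δ := norm_pos_iff.mpr hz0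
  have hδ0' : 0 < ‖z'‖ := norm_pos_iff.mpr hz0'
  have hdd := pd_inv_dist hz0 hz0'
  have hsd' : s * (δ * ‖z'‖) ≤ dist z z' := by
    rw [← hdd]; exact mul_le_mul_of_nonneg_right hsd (by positivity)
  have htri : δ - ‖z'‖ ≤ dist z z' := by rw [dist_eq_norm]; exact norm_sub_norm_le _ _
  -- a common final step
  have fin : ∀ (w : ℂ) (R c : ℝ), Metric.ball w R ⊆ C → w ≠ 0 → 0 < c →
      c + ε / 128 * s ≤ ‖w‖⁻¹ → ε / 128 * s * ‖w‖ ≤ R * c →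
      Metric.ball w⁻¹ (ε / 128 * s) ⊆ (fun z => z⁻¹) '' (C \ {0}) := by
    intro w R c hwC hw0 hc hcw hR y hy
    have hy1 : dist y w⁻¹ < ε / 128 * s := hy
    have hyn : c < ‖y‖ := by
      have : ‖w⁻¹‖ - ‖y‖ ≤ dist y w⁻¹ := by
        rw [dist_comm, dist_eq_norm]; exact norm_sub_norm_le _ _
      rw [norm_inv] at this
      linarith
    have hy0 : y ≠ 0 := by
      intro h; rw [h, norm_zero] at hyn; linarith
    refine ⟨y⁻¹, ⟨hwC ?_, inv_ne_zero hy0⟩, inv_inv y⟩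
    have e := pd_inv_dist (inv_ne_zero hy0) hw0
    rw [inv_inv] at e
    rw [Metric.mem_ball, ← e]
    have hw1 : 0 < ‖w‖ := norm_pos_iff.mpr hw0
    have hy2 : 0 < ‖y‖ := norm_pos_iff.mpr hy0
    rw [norm_inv, inv_mul_eq_div, ← mul_div_assoc, div_lt_iff₀ hy2]
    have a1 : dist y w⁻¹ * ‖w‖ < ε / 128 * s * ‖w‖ := mul_lt_mul_of_pos_right hy1 hw1
    have hRpos : 0 < R := by
      by_contra hR0
      have : 0 < ε / 128 * s * ‖w‖ := by positivity
      nlinarith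
    have a2 : R * c < R * ‖y‖ := mul_lt_mul_of_pos_left hyn hRpos
    linarith
  rcases le_or_gt (s * δ) 4 with hcase | hcase
  · -- near case
    have ht : s * δ ^ 2 / 8 ≤ dist z z' := by
      rcases le_or_gt (δ / 2) ‖z'‖ with hc | hc
      · have : s * δ * (δ / 2) ≤ s * δ * ‖z'‖ := mul_le_mul_of_nonneg_left hc (by positivity)
        have : 0 ≤ s * δ ^ 2 := by positivity
        nlinarith
      · nlinarith
    obtain ⟨w, hw1, hw2⟩ := h z hz z' hz' (s * δ ^ 2 / 8) (by positivity) ht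
    rw [one_mul] at hw2
    have hw3 : s * δ ^ 2 / 8 ≤ δ / 2 := by nlinarith
    have hwl : δ / 2 ≤ ‖w‖ := by
      have : ‖z‖ - ‖w‖ ≤ dist w z := by rw [dist_comm, dist_eq_norm]; exact norm_sub_norm_le _ _
      linarith
    have hwu : ‖w‖ ≤ 3 / 2 * δ := by
      have : ‖w‖ - ‖z‖ ≤ dist w z := by rw [dist_eq_norm]; exact norm_sub_norm_le _ _
      linarith
    have hw0 : w ≠ 0 := by
      intro h; rw [h, norm_zero] at hwl; linarith
    have hwp : 0 < ‖w‖ := norm_pos_iff.mpr hw0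
    refine ⟨w⁻¹, fin w _ (1 / (2 * δ)) hw1 hw0 (by positivity) ?_ ?_, ?_⟩
    · have e1 : 2 / (3 * δ) ≤ ‖w‖⁻¹ := by
        rw [← one_div, div_le_div_iff₀ (by positivity) hwp]; linarith
      have e2 : ε / 128 * s ≤ 1 / (6 * δ) := by
        rw [le_div_iff₀ (by positivity)]
        nlinarith [mul_le_mul_of_nonneg_right h1 (show (0:ℝ) ≤ s * δ by positivity)]
      have e3 : 1 / (2 * δ) + 1 / (6 * δ) = 2 / (3 * δ) := by field_simp; norm_num
      linarith
    · have : ε * (s * δ ^ 2 / 8) * (1 / (2 * δ)) = ε * s * δ / 16 := by field_simp; norm_num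
      rw [this]
      have : ε / 128 * s * ‖w‖ ≤ ε / 128 * s * (3 / 2 * δ) :=
        mul_le_mul_of_nonneg_left hwu (by positivity)
      have : 0 ≤ ε * s * δ := by positivity
      nlinarith
    · have e := pd_inv_dist hw0 hz0
      have : dist w⁻¹ z⁻¹ * (δ / 2 * δ) ≤ s / 4 * (δ / 2 * δ) := by
        calc dist w⁻¹ z⁻¹ * (δ / 2 * δ) ≤ dist w⁻¹ z⁻¹ * (‖w‖ * ‖z‖) := by gcongr
          _ = dist w z := e
          _ ≤ s * δ ^ 2 / 8 := hw2
          _ = s / 4 * (δ / 2 * δ) := by ring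
      have := le_of_mul_le_mul_right this (by positivity)
      nlinarith
  · -- far case
    have hzs : ‖z⁻¹‖ ≤ s / 4 := by
      rw [norm_inv, ← one_div, div_le_div_iff₀ hδ0 (by norm_num)]; linarith
    have hzs' : 3 * s / 4 ≤ ‖z'⁻¹‖ := by
      have : dist z⁻¹ z'⁻¹ ≤ ‖z⁻¹‖ + ‖z'⁻¹‖ := by rw [dist_eq_norm]; exact norm_sub_le _ _
      linarith [show s ≤ dist z⁻¹ z'⁻¹ from hsd]
    have hz's : ‖z'‖ * s ≤ 4 / 3 := by
      rw [norm_inv, ← one_div, le_div_iff₀ hδ0'] at hzs'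
      linarith
    have ht : 2 / s ≤ dist z' z := by
      rw [dist_comm, div_le_iff₀ hs]
      nlinarith
    obtain ⟨w, hw1, hw2⟩ := h z' hz' z hz (2 / s) (by positivity) ht
    rw [one_mul] at hw2
    -- shift
    have hshift : ∃ w', Metric.ball w' (ε / (4 * s)) ⊆ C ∧ ε / (2 * s) ≤ ‖w'‖ ∧ dist w' w ≤ ε / s := by
      rcases le_or_gt (ε / (2 * s)) ‖w‖ with hc | hc
      · refine ⟨w, (Metric.ball_subset_ball ?_).trans hw1, hc, by rw [dist_self]; positivity⟩
        rw [← mul_div_assoc, div_le_div_iff₀ (by positivity) hs]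
        nlinarith [mul_pos h0 hs]
      · have hn : ‖((ε / s : ℝ) : ℂ)‖ = ε / s := by
          rw [Complex.norm_real, Real.norm_of_nonneg (by positivity)]
        have e2 : ε / s = 2 * (ε / (2 * s)) := by field_simp
        have e4 : ε / (4 * s) = ε / (2 * s) / 2 := by field_simp; norm_num
        have e5 : ε * (2 / s) = 4 * (ε / (2 * s)) := by field_simp; norm_num
        have hpos : 0 < ε / (2 * s) := by positivity
        have hdw : dist (w + ((ε / s : ℝ) : ℂ)) w = ε / s := by
          rw [dist_eq_norm, add_sub_cancel_left, hn]
        refine ⟨w + ((ε / s : ℝ) : ℂ), ?_, ?_, hdw.le⟩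
        · refine Set.Subset.trans (Metric.ball_subset_ball' ?_) hw1
          rw [hdw]; linarith
        · have := norm_sub_norm_le ((ε / s : ℝ) : ℂ) (-w)
          rw [sub_neg_eq_add, norm_neg, hn, add_comm] at this
          linarith
    obtain ⟨w', hb, hlow, hdw⟩ := hshift
    have hwp : 0 < ‖w'‖ := lt_of_lt_of_le (by positivity) hlow
    have hw0 : w' ≠ 0 := norm_pos_iff.mp hwp
    have hup : ‖w'‖ ≤ 5 / s := by
      have e1 : ‖w'‖ - ‖z'‖ ≤ dist w' z' := by rw [dist_eq_norm]; exact norm_sub_norm_le _ _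
      have e2 := dist_triangle w' w z'
      have e3 : ε / s ≤ 1 / s := by gcongr
      have e4 : ‖z'‖ ≤ (4 / 3) / s := by rw [le_div_iff₀ hs]; exact hz's
      have e5 : 5 / s = 2 / s + 1 / s + 2 / s := by field_simp; norm_num
      have e6 : (4 / 3) / s ≤ 2 / s := by gcongr; norm_num
      linarith
    refine ⟨w'⁻¹, fin w' _ (s / 6) hb hw0 (by positivity) ?_ ?_, ?_⟩
    · have e1 : s / 5 ≤ ‖w'‖⁻¹ := by
        rw [← one_div, div_le_div_iff₀ (by norm_num) hwp]
        rw [le_div_iff₀ hs] at hup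
        linarith
      nlinarith [mul_le_mul_of_nonneg_right h1 hs.le]
    · have e1 : ε / (4 * s) * (s / 6) = ε / 24 := by field_simp; norm_num
      have e2 : ε / 128 * s * ‖w'‖ ≤ ε / 128 * s * (5 / s) :=
        mul_le_mul_of_nonneg_left hup (by positivity)
      have e3 : ε / 128 * s * (5 / s) = 5 * ε / 128 := by field_simp
      rw [e1]; linarith
    · have e1 : dist w'⁻¹ z⁻¹ ≤ ‖w'⁻¹‖ + ‖z⁻¹‖ := by rw [dist_eq_norm]; exact norm_sub_le _ _
      have e2 : ‖w'⁻¹‖ ≤ 2 / ε * s := by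
        rw [norm_inv]
        have := inv_anti₀ (by positivity) hlow
        rw [inv_div] at this
        calc _ ≤ _ := this
          _ = _ := by ring
      have e3 : s / 4 ≤ 2 / ε * s := by
        have : 2 ≤ 2 / ε := by rw [le_div_iff₀ h0]; linarith
        nlinarith
      have e4 : 4 / ε * s = 2 / ε * s + 2 / ε * s := by ring
      show dist w'⁻¹ z⁻¹ ≤ _
      linarith

lemma pd_pack_ball {ι : Type*} (I : Finset ι) (w : ι → ℂ) (x : ℂ) (r R : ℝ) (hr : 0 < r) (hR : 0 ≤ R)
    (hdis : ∀ i ∈ I, ∀ j ∈ I, i ≠ j → Disjoint (Metric.ball (w i) r) (Metric.ball (w j) r))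
    (hsub : ∀ i ∈ I, Metric.ball (w i) r ⊆ Metric.ball x R) : (I.card : ℝ) * r ^ 2 ≤ R ^ 2 := by
  have h1 : MeasureTheory.volume (⋃ i ∈ I, Metric.ball (w i) r) ≤
      MeasureTheory.volume (Metric.ball x R) := MeasureTheory.measure_mono (Set.iUnion₂_subset hsub)
  rw [MeasureTheory.measure_biUnion_finset (fun i hi j hj h => hdis i hi j hj h)
    (fun i _ => measurableSet_ball)] at h1
  simp only [Complex.volume_ball, Finset.sum_const, nsmul_eq_mul] at h1
  rw [← mul_assoc] at h1
  have hpi : ((NNReal.pi : NNReal) : ENNReal) ≠ 0 := by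
    simpa using NNReal.pi_ne_zero
  have h2 := (ENNReal.mul_le_mul_iff_left hpi ENNReal.coe_ne_top).mp h1
  rw [← ENNReal.ofReal_pow hr.le, ← ENNReal.ofReal_pow hR, ← ENNReal.ofReal_natCast,
    ← ENNReal.ofReal_mul (by positivity)] at h2
  exact (ENNReal.ofReal_le_ofReal_iff (by positivity)).mp h2

def pdK (ε M : ℝ) : ℝ := ((4 + M + ε) / ε) ^ 2

lemma pd_pack {ι : Type*} (ε M : ℝ) (hε : 0 < ε) (hM : 0 ≤ M) (I : Finset ι) (F : ι → Set ℂ) (S : Set ℂ)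
    (hdis : ∀ i ∈ I, ∀ j ∈ I, i ≠ j → Disjoint (F i) (F j))
    (hth : ∀ i ∈ I, pdThick ε M (F i))
    (hS : Metric.ediam S ≠ ⊤) (hmeet : ∀ i ∈ I, (F i ∩ S).Nonempty)
    (hdiam : ∀ i ∈ I, Metric.ediam S ≤ Metric.ediam (F i)) : (I.card : ℝ) ≤ pdK ε M := by
  classical
  have hK1 : 1 ≤ pdK ε M := by
    unfold pdK
    apply one_le_pow₀
    rw [le_div_iff₀ hε]; linarith
  by_cases h0 : Metric.ediam S = 0
  · have hss := Metric.ediam_eq_zero_iff.mp h0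
    have : I.card ≤ 1 := by
      rw [Finset.card_le_one]
      intro i hi j hj
      by_contra hne
      obtain ⟨x, hx1, hx2⟩ := hmeet i hi
      obtain ⟨y, hy1, hy2⟩ := hmeet j hj
      have := hss hx2 hy2
      subst this
      exact Set.disjoint_left.mp (hdis i hi j hj hne) hx1 hy1
    calc (I.card : ℝ) ≤ 1 := by exact_mod_cast this
      _ ≤ _ := hK1
  set d := (Metric.ediam S).toReal with hd
  have hd0 : 0 < d := ENNReal.toReal_pos h0 hS
  have hdS : Metric.ediam S = ENNReal.ofReal d := (ENNReal.ofReal_toReal hS).symm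
  have hex : ∀ i ∈ I, ∃ w, Metric.ball w (ε * (d / 4)) ⊆ F i ∧ ∃ z ∈ S, dist w z ≤ M * (d / 4) := by
    intro i hi
    obtain ⟨z, hzF, hzS⟩ := hmeet i hi
    have hz' : ∃ z' ∈ F i, d / 4 ≤ dist z z' := by
      by_contra hcon
      push Not at hcon
      have h2 : Metric.ediam (F i) ≤ ENNReal.ofReal (d / 2) := by
        apply Metric.ediam_le
        intro x hx y hy
        rw [edist_dist]
        apply ENNReal.ofReal_le_ofReal
        have := dist_triangle_left x y z
        linarith [hcon x hx, hcon y hy]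
      have h3 := (hdiam i hi).trans h2
      rw [hdS, ENNReal.ofReal_le_ofReal_iff (by linarith)] at h3
      linarith
    obtain ⟨z', hz'F, hz'd⟩ := hz'
    obtain ⟨w, hw1, hw2⟩ := hth i hi z hzF z' hz'F (d / 4) (by linarith) hz'd
    exact ⟨w, hw1, z, hzS, hw2⟩
  rcases I.eq_empty_or_nonempty with rfl | ⟨i0, hi0⟩
  · simp; linarith
  obtain ⟨x, _, hxS⟩ := hmeet i0 hi0
  choose! w hw1 hw2 using hex
  have key := pd_pack_ball I w x (ε * (d / 4)) (d + M * (d / 4) + ε * (d / 4)) (by positivity)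
    (by positivity) (fun i hi j hj h => (hdis i hi j hj h).mono (hw1 i hi) (hw1 j hj)) (by
      intro i hi
      obtain ⟨z, hz, hwz⟩ := hw2 i hi
      apply Metric.ball_subset_ball'
      have h1 : dist z x ≤ d := by
        have := Metric.edist_le_ediam_of_mem hz hxS
        rw [edist_dist, hdS, ENNReal.ofReal_le_ofReal_iff hd0.le] at this
        exact this
      have := dist_triangle (w i) z x
      linarith)
  unfold pdK
  rw [div_pow, le_div_iff₀ (by positivity)]
  have e1 : (ε * (d / 4)) ^ 2 = ε ^ 2 * (d / 4) ^ 2 := by ring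
  have e2 : (d + M * (d / 4) + ε * (d / 4)) ^ 2 = (4 + M + ε) ^ 2 * (d / 4) ^ 2 := by ring
  rw [e1, e2, ← mul_assoc] at key
  exact le_of_mul_le_mul_right key (by positivity)

open Classical in
lemma pd_overlay {ι : Type*} (ε M : ℝ) (hε : 0 < ε) (hM : 0 ≤ M) (I : Finset ι) (F F' : ι → Set ℂ)
    (hdis : ∀ i ∈ I, ∀ j ∈ I, i ≠ j → Disjoint (F i) (F j))
    (hdis' : ∀ i ∈ I, ∀ j ∈ I, i ≠ j → Disjoint (F' i) (F' j))
    (hth : ∀ i ∈ I, pdThick ε M (F i)) (hth' : ∀ i ∈ I, pdThick ε M (F' i))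
    (hb : ∀ i ∈ I, Metric.ediam (F' i) ≠ ⊤) :
    (((I ×ˢ I).filter (fun p => (F p.1 ∩ F' p.2).Nonempty)).card : ℝ) ≤ 2 * pdK ε M * I.card := by
  have h1 : (((I ×ˢ I).filter (fun p => (F p.1 ∩ F' p.2).Nonempty ∧
      Metric.ediam (F' p.2) ≤ Metric.ediam (F p.1))).card : ℝ) ≤ pdK ε M * I.card := by
    have : ((I ×ˢ I).filter (fun p => (F p.1 ∩ F' p.2).Nonempty ∧
      Metric.ediam (F' p.2) ≤ Metric.ediam (F p.1))).card =
      ∑ j ∈ I, (I.filter (fun i => (F i ∩ F' j).Nonempty ∧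
        Metric.ediam (F' j) ≤ Metric.ediam (F i))).card := by
      simp only [Finset.card_filter]
      rw [Finset.sum_product_right]
    rw [this]
    push_cast
    rw [mul_comm, ← nsmul_eq_mul]
    refine Finset.sum_le_card_nsmul _ _ _ fun j hj => ?_
    refine pd_pack ε M hε hM _ F (F' j) ?_ ?_ (hb j hj) ?_ ?_
    · intro i hi k hk h
      exact hdis i (Finset.mem_filter.mp hi).1 k (Finset.mem_filter.mp hk).1 h
    · intro i hi; exact hth i (Finset.mem_filter.mp hi).1
    · intro i hi; exact (Finset.mem_filter.mp hi).2.1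
    · intro i hi; exact (Finset.mem_filter.mp hi).2.2
  have h2 : (((I ×ˢ I).filter (fun p => (F p.1 ∩ F' p.2).Nonempty ∧
      Metric.ediam (F p.1) < Metric.ediam (F' p.2))).card : ℝ) ≤ pdK ε M * I.card := by
    have : ((I ×ˢ I).filter (fun p => (F p.1 ∩ F' p.2).Nonempty ∧
      Metric.ediam (F p.1) < Metric.ediam (F' p.2))).card =
      ∑ i ∈ I, (I.filter (fun j => (F i ∩ F' j).Nonempty ∧
        Metric.ediam (F i) < Metric.ediam (F' j))).card := by
      simp only [Finset.card_filter]
      rw [Finset.sum_product]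
    rw [this]
    push_cast
    rw [mul_comm, ← nsmul_eq_mul]
    refine Finset.sum_le_card_nsmul _ _ _ fun i hi => ?_
    rcases (I.filter (fun j => (F i ∩ F' j).Nonempty ∧
        Metric.ediam (F i) < Metric.ediam (F' j))).eq_empty_or_nonempty with he | ⟨j0, hj0⟩
    · rw [he]; simp; unfold pdK; positivity
    refine pd_pack ε M hε hM _ F' (F i) ?_ ?_ ?_ ?_ ?_
    · intro i hi k hk h
      exact hdis' i (Finset.mem_filter.mp hi).1 k (Finset.mem_filter.mp hk).1 h
    · intro i hi; exact hth' i (Finset.mem_filter.mp hi).1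
    · exact ((Finset.mem_filter.mp hj0).2.2.trans_le le_top).ne
    · intro j hj; rw [Set.inter_comm]; exact (Finset.mem_filter.mp hj).2.1
    · intro j hj; exact (Finset.mem_filter.mp hj).2.2.le
  have h3 : ((I ×ˢ I).filter (fun p => (F p.1 ∩ F' p.2).Nonempty)).card ≤
     ((I ×ˢ I).filter (fun p => (F p.1 ∩ F' p.2).Nonempty ∧
      Metric.ediam (F' p.2) ≤ Metric.ediam (F p.1))).card +
     ((I ×ˢ I).filter (fun p => (F p.1 ∩ F' p.2).Nonempty ∧
      Metric.ediam (F p.1) < Metric.ediam (F' p.2))).card := by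
    refine (Finset.card_le_card ?_).trans (Finset.card_union_le _ _)
    intro p hp
    rw [Finset.mem_filter] at hp
    rw [Finset.mem_union, Finset.mem_filter, Finset.mem_filter]
    rcases le_or_gt (Metric.ediam (F' p.2)) (Metric.ediam (F p.1)) with h | h
    · left; exact ⟨hp.1, hp.2, h⟩
    · right; exact ⟨hp.1, hp.2, h⟩
  have h3' : (((I ×ˢ I).filter (fun p => (F p.1 ∩ F' p.2).Nonempty)).card : ℝ) ≤
     ((I ×ˢ I).filter (fun p => (F p.1 ∩ F' p.2).Nonempty ∧
      Metric.ediam (F' p.2) ≤ Metric.ediam (F p.1))).card +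
     ((I ×ˢ I).filter (fun p => (F p.1 ∩ F' p.2).Nonempty ∧
      Metric.ediam (F p.1) < Metric.ediam (F' p.2))).card := by exact_mod_cast h3
  linarith

/-- Moebius image, pole removed -/
def pdMob (p q r s : ℂ) (C : Set ℂ) : Set ℂ :=
  {w | ∃ z ∈ C, r * z + s ≠ 0 ∧ w = (p * z + q) / (r * z + s)}

lemma pdMob_disj {p q r s : ℂ} (hd : p * s - q * r = 1) {C C' : Set ℂ} (h : Disjoint C C') :
    Disjoint (pdMob p q r s C) (pdMob p q r s C') := by
  rw [Set.disjoint_left]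
  rintro w ⟨z, hz, hz0, rfl⟩ ⟨z', hz', hz0', he⟩
  rw [div_eq_div_iff hz0 hz0'] at he
  have : z = z' := by linear_combination he - (z - z') * hd
  subst this
  exact Set.disjoint_left.mp h hz hz'

lemma pdMob_thick {ε : ℝ} (h0 : 0 < ε) (h1 : ε ≤ 1) {p q r s : ℂ} (hd : p * s - q * r = 1)
    {C : Set ℂ} (h : pdThick ε 1 C) : pdThick (ε / 128) (4 / ε) (pdMob p q r s C) := by
  by_cases hr : r = 0
  · subst hr
    have hps : p * s = 1 := by linear_combination hd
    have hs : s ≠ 0 := right_ne_zero_of_mul_eq_one hps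
    have hp : p ≠ 0 := left_ne_zero_of_mul_eq_one hps
    have : pdMob p q 0 s C = (fun z => (p / s) * z + q / s) '' C := by
      ext w
      constructor
      · rintro ⟨z, hz, _, rfl⟩
        exact ⟨z, hz, by rw [zero_mul, zero_add]; ring⟩
      · rintro ⟨z, hz, rfl⟩
        exact ⟨z, hz, by simpa using hs, by rw [zero_mul, zero_add]; ring⟩
    rw [this]
    refine pdThick_mono (pd_sim h _ _ (div_ne_zero hp hs)) (by linarith) ?_
    rw [le_div_iff₀ h0]; linarith
  · have : pdMob p q r s C = (fun z => (-1 / r) * z + p / r) ''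
        ((fun z => z⁻¹) '' (((fun z => r * z + s) '' C) \ {0})) := by
      have key : ∀ z, r * z + s ≠ 0 → (p * z + q) / (r * z + s) = (-1 / r) * (r * z + s)⁻¹ + p / r := by
        intro z hz
        rw [div_eq_iff hz, add_mul, mul_assoc, inv_mul_cancel₀ hz]
        field_simp
        linear_combination (-1 : ℂ) * hd
      ext w
      constructor
      · rintro ⟨z, hz, hz0, rfl⟩
        exact ⟨(r * z + s)⁻¹, ⟨r * z + s, ⟨⟨z, hz, rfl⟩, hz0⟩, rfl⟩, (key z hz0).symm⟩
      · rintro ⟨_, ⟨_, ⟨⟨z, hz, rfl⟩, hz0⟩, rfl⟩, rfl⟩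
        exact ⟨z, hz, hz0, (key z hz0).symm⟩
    rw [this]
    refine pd_sim (pd_inv h0 h1 (pd_sim h _ _ hr)) _ _ (div_ne_zero (by norm_num) hr)

open Classical in
lemma pe_cells (P : Finset ℍ) (T : ℕ) (hT : 1 ≤ T) : ∃ S : Finset (Set ℂ),
    (∀ C ∈ S, pdThick (1 / 16) 1 C ∧ Metric.ediam C ≠ ⊤) ∧
    (∀ C ∈ S, ∀ C' ∈ S, C ≠ C' → Disjoint C C') ∧ (∀ z ∈ P, ∃ C ∈ S, (z : ℂ) ∈ C) ∧
    (∀ C ∈ S, (P.filter (fun z : ℍ => (z : ℂ) ∈ C)).card ≤ T) ∧ T * S.card ≤ T + 8 * P.card := by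
  obtain ⟨r, hr0, hr⟩ : ∃ r : ℝ, 0 < r ∧ ∀ z ∈ P, ‖(z : ℂ)‖ < r := by
    refine ⟨∑ z ∈ P, ‖(z : ℂ)‖ + 1, by positivity, fun z hz => ?_⟩
    have := Finset.single_le_sum (f := fun z : ℍ => ‖(z : ℂ)‖) (fun i _ => norm_nonneg _) hz
    linarith
  set β : ℂ := ⟨-r, -r⟩ with hβ
  have h2r : ((2 * r : ℝ) : ℂ) ≠ 0 := by
    exact_mod_cast (by positivity : (2 * r : ℝ) ≠ 0)
  let φ : ℍ → ℂ := fun z => ((z : ℂ) - β) / ((2 * r : ℝ) : ℂ)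
  have hφ : ∀ z, ((2 * r : ℝ) : ℂ) * φ z + β = z := by
    intro z; simp only [φ]; field_simp; ring
  have hφi : Function.Injective φ := by
    intro a b h
    apply UpperHalfPlane.ext
    rw [← hφ a, ← hφ b, h]
  have h0 : ∀ w ∈ P.image φ, pcD 0 w = (0, 0) := by
    intro w hw
    obtain ⟨z, hz, rfl⟩ := Finset.mem_image.mp hw
    have h1 := (Complex.abs_re_le_norm _).trans_lt (hr z hz)
    have h2 := (Complex.abs_im_le_norm _).trans_lt (hr z hz)
    rw [abs_lt] at h1 h2
    have e1 : (φ z).re = ((z : ℂ).re + r) / (2 * r) := by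
      simp only [φ]; rw [Complex.div_ofReal_re]; simp [hβ]
    have e2 : (φ z).im = ((z : ℂ).im + r) / (2 * r) := by
      simp only [φ]; rw [Complex.div_ofReal_im]; simp [hβ]
    simp only [pcD, pow_zero, one_mul]
    rw [e1, e2]
    refine Prod.ext ?_ ?_
    · simp only
      rw [Int.floor_eq_iff]
      constructor
      · push_cast; apply div_nonneg <;> linarith
      · rw [div_lt_iff₀ (by linarith)]; push_cast; linarith
    · simp only
      rw [Int.floor_eq_iff]
      constructor
      · push_cast; apply div_nonneg <;> linarith
      · rw [div_lt_iff₀ (by linarith)]; push_cast; linarith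
  obtain ⟨S, hS1, hS2, hS3, hS4, hS5⟩ := pc_part T hT P.card (P.image φ) 0 (0, 0)
    (Finset.card_image_of_injective _ hφi) h0
  let f : Set ℂ → Set ℂ := fun C => (fun z => ((2 * r : ℝ) : ℂ) * z + β) '' C
  have hinj : Function.Injective (fun z : ℂ => ((2 * r : ℝ) : ℂ) * z + β) := by
    intro a b h
    have h : ((2 * r : ℝ) : ℂ) * a + β = ((2 * r : ℝ) : ℂ) * b + β := h
    exact mul_left_cancel₀ h2r (add_right_cancel h)
  have hmem : ∀ (z : ℍ) (C : Set ℂ), (z : ℂ) ∈ f C ↔ φ z ∈ C := by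
    intro z C
    simp only [f]
    conv_lhs => rw [← hφ z]
    exact hinj.mem_set_image
  refine ⟨S.image f, ?_, ?_, ?_, ?_, ?_⟩
  · intro C hC
    obtain ⟨D, hD, rfl⟩ := Finset.mem_image.mp hC
    refine ⟨pd_sim (pc_thick D (hS1 D hD).1) _ _ h2r, ?_⟩
    have : Metric.ediam (f D) ≤ ENNReal.ofReal (2 * r * 2) := by
      apply Metric.ediam_le
      rintro _ ⟨x, hx, rfl⟩ _ ⟨y, hy, rfl⟩
      rw [edist_dist]
      apply ENNReal.ofReal_le_ofReal
      simp only
      rw [dist_add_right, dist_eq_norm, ← mul_sub, norm_mul, Complex.norm_real,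
        Real.norm_of_nonneg (by positivity), ← dist_eq_norm]
      have hx' : pcD 0 x = (0, 0) := (hS1 D hD).2 hx
      have hy' : pcD 0 y = (0, 0) := (hS1 D hD).2 hy
      have := pcD_dist (hx'.trans hy'.symm)
      rw [pow_zero, mul_one] at this
      gcongr
    exact (this.trans_lt ENNReal.ofReal_lt_top).ne
  · intro C hC C' hC' hne
    obtain ⟨D, hD, rfl⟩ := Finset.mem_image.mp hC
    obtain ⟨D', hD', rfl⟩ := Finset.mem_image.mp hC'
    exact (Set.disjoint_image_iff hinj).mpr (hS2 D hD D' hD' (fun h => hne (by rw [h])))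
  · intro z hz
    obtain ⟨D, hD, hzD⟩ := hS3 (φ z) (Finset.mem_image_of_mem _ hz)
    exact ⟨f D, Finset.mem_image_of_mem _ hD, (hmem z D).mpr hzD⟩
  · intro C hC
    obtain ⟨D, hD, rfl⟩ := Finset.mem_image.mp hC
    refine le_trans ?_ (hS4 D hD)
    rw [Finset.filter_image, Finset.card_image_of_injective _ hφi]
    refine Finset.card_le_card ?_
    intro z hz
    rw [Finset.mem_filter] at hz ⊢
    exact ⟨hz.1, (hmem z D).mp hz.2⟩
  · have h1 : (S.image f).card ≤ S.card := Finset.card_image_le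
    have h2 := Nat.mul_le_mul_left T h1
    have h3 : pcPhi T P.card ≤ 8 * P.card := by
      unfold pcPhi; split_ifs <;> omega
    omega

def peA (P : Finset ℍ) (g : SL(2, ℝ)) : Finset ℍ := P.filter (fun a => g • a ∈ P)

open Classical in
lemma pe_incid {κ : Type*} (P : Finset ℍ) (c : ℍ → κ) (S : Finset κ) (T k : ℕ)
    (hc : ∀ a ∈ P, c a ∈ S) (hT : ∀ C ∈ S, (P.filter (fun a => c a = C)).card ≤ T)
    (G : Finset SL(2, ℝ)) (hG : ∀ g ∈ G, ∀ g' ∈ G, (∀ z : ℍ, g • z = g' • z) → g = g')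
    (hk : ∀ g ∈ G, k ≤ (peA P g).card)
    (hpi : ∀ g ∈ G, 2 * ((peA P g).image (fun a => (c a, c (g • a)))).card ≤ k) :
    G.card * k ≤ 24 * T * P.card ^ 2 := by
  let Ra : SL(2, ℝ) → Finset ℍ := fun g => (peA P g).filter
    (fun a => ∃ a' ∈ peA P g, a' ≠ a ∧ (c a', c (g • a')) = (c a, c (g • a)))
  have h1 : ∀ g ∈ G, k ≤ 2 * (Ra g).card := by
    intro g hg
    have e1 : (Ra g).card + ((peA P g).filter (fun a => ¬ ∃ a' ∈ peA P g, a' ≠ a ∧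
        (c a', c (g • a')) = (c a, c (g • a)))).card = (peA P g).card :=
      Finset.card_filter_add_card_filter_not _
    have e2 : ((peA P g).filter (fun a => ¬ ∃ a' ∈ peA P g, a' ≠ a ∧
        (c a', c (g • a')) = (c a, c (g • a)))).card ≤
        ((peA P g).image (fun a => (c a, c (g • a)))).card := by
      refine Finset.card_le_card_of_injOn (fun a => (c a, c (g • a))) ?_ ?_
      · intro a ha
        exact Finset.mem_image_of_mem _ (Finset.mem_filter.mp ha).1
      · intro a ha b hb hab
        have ha := Finset.mem_filter.mp (Finset.mem_coe.mp ha)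
        have hb := Finset.mem_filter.mp (Finset.mem_coe.mp hb)
        by_contra hne
        exact hb.2 ⟨a, ha.1, hne, hab⟩
    have := hk g hg
    have := hpi g hg
    omega
  let Pc : κ → Finset ℍ := fun C => P.filter (fun a => c a = C)
  let E : κ × κ → Finset (ℍ × ℍ) := fun q => Pc q.1 ×ˢ Pc q.2
  have h2 : ∑ g ∈ G, (Ra g).card ≤ ∑ q ∈ S ×ˢ S, ∑ e ∈ E q, (pbRich G (E q) e).card := by
    rw [← Finset.card_sigma]
    have : ∑ q ∈ S ×ˢ S, ∑ e ∈ E q, (pbRich G (E q) e).card =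
        ((S ×ˢ S).sigma (fun q => (E q).sigma (fun e => pbRich G (E q) e))).card := by
      rw [Finset.card_sigma]
      refine Finset.sum_congr rfl fun q _ => ?_
      rw [Finset.card_sigma]
    rw [this]
    refine Finset.card_le_card_of_injOn
      (fun x => ⟨(c x.2, c (x.1 • x.2)), ⟨(x.2, x.1 • x.2), x.1⟩⟩) ?_ ?_
    · rintro ⟨g, a⟩ hx
      obtain ⟨hg, ha⟩ := Finset.mem_sigma.mp hx
      obtain ⟨ha, a', ha', hne, hcc⟩ := Finset.mem_filter.mp ha
      have haP := Finset.mem_filter.mp ha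
      have haP' := Finset.mem_filter.mp ha'
      have hcc := Prod.mk.injEq _ _ _ _ ▸ hcc
      refine Finset.mem_coe.mpr (Finset.mem_sigma.mpr ⟨Finset.mem_product.mpr ⟨hc _ haP.1, hc _ haP.2⟩,
        Finset.mem_sigma.mpr ⟨?_, ?_⟩⟩)
      · exact Finset.mem_product.mpr ⟨Finset.mem_filter.mpr ⟨haP.1, rfl⟩,
          Finset.mem_filter.mpr ⟨haP.2, rfl⟩⟩
      · refine Finset.mem_filter.mpr ⟨hg, rfl, (a', g • a'), ?_, ?_, rfl⟩
        · exact Finset.mem_product.mpr ⟨Finset.mem_filter.mpr ⟨haP'.1, hcc.1⟩,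
            Finset.mem_filter.mpr ⟨haP'.2, hcc.2⟩⟩
        · intro h
          exact hne (congrArg Prod.fst h)
    · rintro ⟨g, a⟩ _ ⟨g', a'⟩ _ h
      simp only [Sigma.mk.injEq, heq_eq_eq, Prod.mk.injEq] at h
      obtain ⟨⟨h1, h2⟩, h3⟩ := h
      simp_all
  have h3 : ∑ q ∈ S ×ˢ S, ∑ e ∈ E q, (pbRich G (E q) e).card ≤
      ∑ q ∈ S ×ˢ S, 12 * T * ((Pc q.1).card * (Pc q.2).card) := by
    refine Finset.sum_le_sum fun q hq => ?_
    obtain ⟨hq1, hq2⟩ := Finset.mem_product.mp hq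
    have := pb_main G hG (Pc q.1) (Pc q.2) (E q) subset_rfl
    have t1 : (Pc q.1).card ≤ T := hT _ hq1
    have t2 : (Pc q.2).card ≤ T := hT _ hq2
    rw [show (E q).card = (Pc q.1).card * (Pc q.2).card from Finset.card_product _ _] at this
    refine this.trans (Nat.mul_le_mul_right _ (by omega))
  have h4 : ∑ q ∈ S ×ˢ S, 12 * T * ((Pc q.1).card * (Pc q.2).card) = 12 * T * P.card ^ 2 := by
    rw [← Finset.mul_sum, Finset.sum_product]
    dsimp only
    rw [← Finset.sum_mul_sum,
      ← Finset.card_eq_sum_card_fiberwise (f := c) hc, sq]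
  have h5 : G.card * k ≤ 2 * ∑ g ∈ G, (Ra g).card := by
    rw [Finset.mul_sum, ← smul_eq_mul]
    exact Finset.card_nsmul_le_sum _ _ _ h1
  calc G.card * k ≤ _ := h5
    _ ≤ 2 * (12 * T * P.card ^ 2) := Nat.mul_le_mul_left _ (h2.trans (h3.trans h4.le))
    _ = _ := by ring

lemma pe_rich : ∃ C0 : ℕ, ∀ (P : Finset ℍ) (G : Finset SL(2, ℝ)) (k : ℕ), 2 ≤ k →
    (∀ g ∈ G, ∀ g' ∈ G, (∀ z : ℍ, g • z = g' • z) → g = g') →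
    (∀ g ∈ G, k ≤ (peA P g).card) → G.card * k ^ 2 ≤ C0 * P.card ^ 3 := by
  classical
  set K := pdK (1 / 16 / 128) (4 / (1 / 16)) with hK
  have hK0 : 0 < K := by rw [hK]; unfold pdK; positivity
  obtain ⟨L, hL⟩ := exists_nat_gt (64 * K)
  have hL1 : 1 ≤ L := by
    by_contra h
    have : L = 0 := by omega
    rw [this] at hL; push_cast at hL; linarith
  refine ⟨48 * L, fun P G k hk hG hA => ?_⟩
  rcases G.eq_empty_or_nonempty with rfl | ⟨g0, hg0⟩
  · simp
  have hkN : k ≤ P.card := (hA g0 hg0).trans (Finset.card_le_card (Finset.filter_subset _ _))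
  rcases Nat.lt_or_ge k L with hkL | hkL
  · have := pe_incid P (fun _ => ()) {()} P.card k (by simp) (by
        intro C _
        refine Finset.card_le_card (fun a ha => ?_)
        simp at ha
        exact ha)
      G hG hA (fun g _ => by
        refine le_trans (Nat.mul_le_mul_left 2 (Finset.card_le_one.mpr
          fun _ _ _ _ => Subsingleton.elim _ _)) (by omega))
    calc G.card * k ^ 2 = G.card * k * k := by ring
      _ ≤ 24 * P.card * P.card ^ 2 * L := Nat.mul_le_mul this hkL.le
      _ ≤ 48 * L * P.card ^ 3 := by ring_nf; omega
  · set T := L * P.card / k + 1 with hT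
    have hT1 : L * P.card ≤ T * k := by
      have := Nat.lt_div_mul_add (a := L * P.card) (b := k) (by omega)
      rw [hT, add_mul]; omega
    have hT2 : T * k ≤ 2 * L * P.card := by
      have h1 := Nat.div_mul_le_self (L * P.card) k
      have h2 : k ≤ L * P.card := hkN.trans (Nat.le_mul_of_pos_left _ hL1)
      rw [hT, add_mul]; linarith
    obtain ⟨S, hS1, hS2, hS3, hS4, hS5⟩ := pe_cells P T (by rw [hT]; exact Nat.le_add_left _ _)
    have hc : ∀ a : ℍ, ∃ C : Set ℂ, a ∈ P → C ∈ S ∧ (a : ℂ) ∈ C := by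
      intro a
      by_cases ha : a ∈ P
      · obtain ⟨C, h1, h2⟩ := hS3 a ha
        exact ⟨C, fun _ => ⟨h1, h2⟩⟩
      · exact ⟨∅, fun h => absurd h ha⟩
    choose c hc using hc
    have hScard : 4 * K * S.card ≤ k := by
      have e1 : (T : ℝ) * S.card ≤ T + 8 * P.card := by exact_mod_cast hS5
      have e2 : (L : ℝ) * P.card ≤ T * k := by exact_mod_cast hT1
      have e3 : (L : ℝ) ≤ k := by exact_mod_cast hkL
      have hTp : (0 : ℝ) < T := by rw [hT]; positivity
      have hLp : (0 : ℝ) < L := by exact_mod_cast hL1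
      have e4 : (T : ℝ) * L * S.card ≤ T * L + 8 * (T * k) := by nlinarith
      have e5 : (L : ℝ) * S.card ≤ L + 8 * k := by
        have : (T : ℝ) * (L * S.card) ≤ T * (L + 8 * k) := by linarith
        exact le_of_mul_le_mul_left this hTp
      have e6 : 64 * K * S.card ≤ L * S.card := by
        apply mul_le_mul_of_nonneg_right hL.le; positivity
      linarith
    have := pe_incid P c S T k (fun a ha => (hc a ha).1) (by
        intro C hC
        refine le_trans (Finset.card_le_card ?_) (hS4 C hC)
        intro a ha
        rw [Finset.mem_filter] at ha ⊢
        exact ⟨ha.1, ha.2 ▸ (hc a ha.1).2⟩) G hG hA (by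
        intro g hg
        have hdet : ((g 0 0 : ℝ) : ℂ) * ((g 1 1 : ℝ) : ℂ) - ((g 0 1 : ℝ) : ℂ) * ((g 1 0 : ℝ) : ℂ) = 1 := by
          exact_mod_cast sl_det g
        have ov := pd_overlay (1 / 16 / 128) (4 / (1 / 16)) (by norm_num) (by norm_num) S
          (fun C => pdMob ((g 0 0 : ℝ) : ℂ) ((g 0 1 : ℝ) : ℂ) ((g 1 0 : ℝ) : ℂ) ((g 1 1 : ℝ) : ℂ) C)
          (fun C => C) (fun i hi j hj h => pdMob_disj hdet (hS2 i hi j hj h)) hS2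
          (fun i hi => pdMob_thick (by norm_num) (by norm_num) hdet (hS1 i hi).1)
          (fun i hi => pdThick_mono (hS1 i hi).1 (by norm_num) (by norm_num))
          (fun i hi => (hS1 i hi).2)
        have hsub : (peA P g).image (fun a => (c a, c (g • a))) ⊆ (S ×ˢ S).filter (fun p =>
            (pdMob ((g 0 0 : ℝ) : ℂ) ((g 0 1 : ℝ) : ℂ) ((g 1 0 : ℝ) : ℂ) ((g 1 1 : ℝ) : ℂ) p.1 ∩
              p.2).Nonempty) := by
          intro x hx
          obtain ⟨a, ha, rfl⟩ := Finset.mem_image.mp hx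
          obtain ⟨ha1, ha2⟩ := Finset.mem_filter.mp ha
          refine Finset.mem_filter.mpr ⟨Finset.mem_product.mpr ⟨(hc _ ha1).1, (hc _ ha2).1⟩,
            ((g • a : ℍ) : ℂ), ?_, (hc _ ha2).2⟩
          exact ⟨a, (hc _ ha1).2, sl_den g a, sl_coe g a⟩
        have hle := Finset.card_le_card hsub
        have hle' : (((peA P g).image (fun a => (c a, c (g • a)))).card : ℝ) ≤ 2 * K * S.card := by
          refine le_trans ?_ ov
          exact_mod_cast hle
        have : (2 : ℝ) * ((peA P g).image (fun a => (c a, c (g • a)))).card ≤ k := by linarith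
        exact_mod_cast this)
    calc G.card * k ^ 2 = G.card * k * k := by ring
      _ ≤ 24 * T * P.card ^ 2 * k := Nat.mul_le_mul_right _ this
      _ = 24 * P.card ^ 2 * (T * k) := by ring
      _ ≤ 24 * P.card ^ 2 * (2 * L * P.card) := Nat.mul_le_mul_left _ hT2
      _ = 48 * L * P.card ^ 3 := by ring

def pfRot (θ : ℝ) : SL(2, ℝ) :=
  ⟨!![Real.cos θ, Real.sin θ; -Real.sin θ, Real.cos θ], by
    rw [Matrix.det_fin_two_of]; have := Real.sin_sq_add_cos_sq θ; nlinarith⟩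

lemma pf_rot_I (θ : ℝ) : pfRot θ • UpperHalfPlane.I = UpperHalfPlane.I := by
  apply UpperHalfPlane.ext
  have h1 := sl_den (pfRot θ) UpperHalfPlane.I
  rw [sl_coe, div_eq_iff h1]
  simp [pfRot]
  apply Complex.ext <;> simp

lemma pf_rot_re (θ : ℝ) (w : ℍ) (h : Real.cos θ * Real.sin θ * (1 - w.re ^ 2 - w.im ^ 2) +
    (Real.cos θ ^ 2 - Real.sin θ ^ 2) * w.re = 0) : (pfRot θ • w).re = 0 := by
  rw [← UpperHalfPlane.coe_re, sl_coe, Complex.div_re, ← add_div, div_eq_zero_iff]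
  left
  simp [pfRot, - UpperHalfPlane.coe_re, - UpperHalfPlane.coe_im]
  simp only [UpperHalfPlane.coe_re, UpperHalfPlane.coe_im, Complex.cos_ofReal_re, Complex.sin_ofReal_re]
  nlinarith

lemma pf_axis (w : ℍ) : ∃ g : SL(2, ℝ), g • UpperHalfPlane.I = UpperHalfPlane.I ∧
    (g • w).re = 0 := by
  have hc : Continuous (fun θ : ℝ => Real.cos θ * Real.sin θ * (1 - w.re ^ 2 - w.im ^ 2) +
    (Real.cos θ ^ 2 - Real.sin θ ^ 2) * w.re) := by fun_prop
  have : (0 : ℝ) ∈ Set.uIcc (Real.cos 0 * Real.sin 0 * (1 - w.re ^ 2 - w.im ^ 2) +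
      (Real.cos 0 ^ 2 - Real.sin 0 ^ 2) * w.re)
      (Real.cos (Real.pi / 2) * Real.sin (Real.pi / 2) * (1 - w.re ^ 2 - w.im ^ 2) +
      (Real.cos (Real.pi / 2) ^ 2 - Real.sin (Real.pi / 2) ^ 2) * w.re) := by
    simp [Set.mem_uIcc]
    rcases le_total w.re 0 with h | h
    · left; exact h
    · right; exact h
  obtain ⟨θ, -, hθ⟩ := intermediate_value_uIcc (hc.continuousOn (s := Set.uIcc 0 (Real.pi / 2))) this
  exact ⟨pfRot θ, pf_rot_I θ, pf_rot_re θ w hθ⟩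

lemma pf_dist (g : SL(2, ℝ)) (a b : ℍ) : dist (g • a) (g • b) = dist a b := by
  exact dist_smul g a b

lemma pf_rotI (w w' : ℍ) (h : dist UpperHalfPlane.I w = dist UpperHalfPlane.I w') :
    ∃ g : SL(2, ℝ), g • UpperHalfPlane.I = UpperHalfPlane.I ∧ g • w = w' := by
  obtain ⟨g, hg1, hg2⟩ := pf_axis w
  obtain ⟨g', hg1', hg2'⟩ := pf_axis w'
  have e1 : dist UpperHalfPlane.I (g • w) = dist UpperHalfPlane.I (g' • w') := by
    rw [← pf_dist g UpperHalfPlane.I w, ← pf_dist g' UpperHalfPlane.I w', hg1, hg1'] at h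
    exact h
  rw [UpperHalfPlane.dist_of_re_eq (by rw [hg2]; simp), UpperHalfPlane.dist_of_re_eq (by rw [hg2']; simp)] at e1
  simp [Real.dist_eq] at e1
  have p1 := (g • w).im_pos
  have p2 := (g' • w').im_pos
  have key : ∃ s : SL(2, ℝ), s • UpperHalfPlane.I = UpperHalfPlane.I ∧ s • g • w = g' • w' := by
    rcases abs_eq_abs.mp e1 with h1 | h1
    · refine ⟨1, by simp, ?_⟩
      rw [one_smul]
      have := Real.log_injOn_pos (Set.mem_Ioi.mpr p1) (Set.mem_Ioi.mpr p2) h1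
      exact UpperHalfPlane.ext_re_im (hg2.trans hg2'.symm) this
    · refine ⟨pfRot (Real.pi / 2), pf_rot_I _, ?_⟩
      rw [← Real.log_inv] at h1
      have := Real.log_injOn_pos (Set.mem_Ioi.mpr p1) (Set.mem_Ioi.mpr (inv_pos.mpr p2)) h1
      apply UpperHalfPlane.ext
      rw [sl_coe, div_eq_iff (sl_den _ _)]
      generalize g • w = u at *
      generalize g' • w' = v at *
      simp [pfRot]
      apply Complex.ext
      · simp [hg2, hg2', this]
        field_simp
      · simp [hg2, hg2', this]
  obtain ⟨s, hs1, hs2⟩ := key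
  refine ⟨g'⁻¹ * s * g, ?_, ?_⟩
  · rw [mul_smul, mul_smul, hg1, hs1, inv_smul_eq_iff, hg1']
  · rw [mul_smul, mul_smul, hs2, inv_smul_smul]

lemma pf_trans (a a' b b' : ℍ) (h : dist a a' = dist b b') :
    ∃ g : SL(2, ℝ), g • a = b ∧ g • a' = b' := by
  have ha := UpperHalfPlane.toSL2R_smul_I a
  have hb := UpperHalfPlane.toSL2R_smul_I b
  set u := a.toSL2R
  set v := b.toSL2R
  have ha' : u⁻¹ • a = UpperHalfPlane.I := by rw [inv_smul_eq_iff, ha]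
  have hb' : v⁻¹ • b = UpperHalfPlane.I := by rw [inv_smul_eq_iff, hb]
  obtain ⟨g, h1, h2⟩ := pf_rotI (u⁻¹ • a') (v⁻¹ • b') (by
    rw [← pf_dist u⁻¹ a a', ← pf_dist v⁻¹ b b', ha', hb'] at h; exact h)
  refine ⟨v * g * u⁻¹, ?_, ?_⟩
  · rw [mul_smul, mul_smul, ha', h1, hb]
  · rw [mul_smul, mul_smul, h2, smul_inv_smul]

lemma pg_harm (N : ℕ) (hN : 1 ≤ N) : ∑ k ∈ Finset.Icc 2 N, (1 / (k : ℝ)) ≤ Real.log N := by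
  have h := harmonic_le_one_add_log N
  rw [harmonic_eq_sum_Icc] at h
  have e : Finset.Icc 1 N = insert 1 (Finset.Icc 2 N) := by
    ext x; simp only [Finset.mem_Icc, Finset.mem_insert]; omega
  rw [e, Finset.sum_insert (by simp)] at h
  push_cast at h
  simp only [inv_one] at h
  simp only [one_div]
  linarith

lemma pg_sq (m N : ℕ) (h2 : 2 ≤ m) (hN : m ≤ N) :
    (m : ℝ) ^ 2 ≤ ∑ k ∈ Finset.Icc 2 N, if k ≤ m then 4 * (k : ℝ) else 0 := by
  rw [← Finset.sum_filter]
  have e : (Finset.Icc 2 N).filter (fun k => k ≤ m) = Finset.Icc 2 m := by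
    ext x; simp only [Finset.mem_Icc, Finset.mem_filter]; omega
  rw [e]
  clear e hN
  have : ∑ k ∈ Finset.Icc 2 m, 4 * (k : ℝ) = 2 * m ^ 2 + 2 * m - 4 := by
    induction m, h2 using Nat.le_induction with
    | base => norm_num
    | succ n hn ih =>
      rw [Finset.sum_Icc_succ_top (by omega), ih]; push_cast; ring
  rw [this]
  have : (2 : ℝ) ≤ m := by exact_mod_cast h2
  nlinarith

open Classical in
lemma pg_sum {α : Type*} (G : Finset α) (m : α → ℕ) (N : ℕ) (A : ℝ) (hN : 1 ≤ N)
    (h2 : ∀ g ∈ G, 2 ≤ m g ∧ m g ≤ N)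
    (hA : ∀ k : ℕ, 2 ≤ k → ((G.filter (fun g => k ≤ m g)).card : ℝ) * (k : ℝ) ^ 2 ≤ A) :
    ∑ g ∈ G, (m g : ℝ) ^ 2 ≤ 4 * A * Real.log N := by
  have hA0 : 0 ≤ A := le_trans (by positivity) (hA 2 le_rfl)
  calc ∑ g ∈ G, (m g : ℝ) ^ 2
      ≤ ∑ g ∈ G, ∑ k ∈ Finset.Icc 2 N, if k ≤ m g then 4 * (k : ℝ) else 0 :=
        Finset.sum_le_sum fun g hg => pg_sq _ _ (h2 g hg).1 (h2 g hg).2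
    _ = ∑ k ∈ Finset.Icc 2 N, ∑ g ∈ G, if k ≤ m g then 4 * (k : ℝ) else 0 := Finset.sum_comm
    _ ≤ ∑ k ∈ Finset.Icc 2 N, 4 * A * (1 / (k : ℝ)) := by
        refine Finset.sum_le_sum fun k hk => ?_
        have hk2 := (Finset.mem_Icc.mp hk).1
        have hk0 : (0 : ℝ) < k := by exact_mod_cast (by omega : 0 < k)
        rw [← Finset.sum_filter, Finset.sum_const, nsmul_eq_mul, mul_one_div, le_div_iff₀ hk0]
        have := hA k hk2
        nlinarith
    _ = 4 * A * ∑ k ∈ Finset.Icc 2 N, (1 / (k : ℝ)) := by rw [Finset.mul_sum]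
    _ ≤ _ := mul_le_mul_of_nonneg_left (pg_harm N hN) (by positivity)

lemma pg_rep : ∃ rep : SL(2, ℝ) → SL(2, ℝ), (∀ g, ∀ z : ℍ, rep g • z = g • z) ∧
    ∀ g g', (∀ z : ℍ, g • z = g' • z) → rep g = rep g' := by
  let s : Setoid SL(2, ℝ) := ⟨fun g g' => ∀ z : ℍ, g • z = g' • z,
    ⟨fun _ _ => rfl, fun h z => (h z).symm, fun h h' z => (h z).trans (h' z)⟩⟩
  refine ⟨fun g => (Quotient.mk s g).out, fun g z => ?_, fun g g' h => ?_⟩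
  · exact Quotient.exact (Quotient.out_eq (Quotient.mk s g)) z
  · have : Quotient.mk s g = Quotient.mk s g' := Quotient.sound h
    exact congrArg Quotient.out this

open Classical in
def pgQuad (P : Finset ℍ) : Finset ((ℍ × ℍ) × (ℍ × ℍ)) :=
  ((P ×ˢ P) ×ˢ (P ×ˢ P)).filter (fun q => dist q.1.1 q.1.2 = dist q.2.1 q.2.2)

lemma pg_energy : ∃ C : ℝ, 0 < C ∧ ∀ P : Finset ℍ, 2 ≤ P.card →
    ((pgQuad P).card : ℝ) ≤ C * (P.card : ℝ) ^ 3 * Real.log P.card := by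
  classical
  obtain ⟨C0, hC0⟩ := pe_rich
  obtain ⟨rep, hrep1, hrep2⟩ := pg_rep
  have hF : ∀ q : (ℍ × ℍ) × (ℍ × ℍ), ∃ g : SL(2, ℝ), dist q.1.1 q.1.2 = dist q.2.1 q.2.2 →
      g • q.1.1 = q.2.1 ∧ g • q.1.2 = q.2.2 := by
    intro q
    by_cases h : dist q.1.1 q.1.2 = dist q.2.1 q.2.2
    · obtain ⟨g, hg⟩ := pf_trans _ _ _ _ h
      exact ⟨g, fun _ => hg⟩
    · exact ⟨1, fun h' => absurd h' h⟩
  choose F hF using hF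
  refine ⟨4 * C0 + 1, by positivity, fun P hP => ?_⟩
  have hP' : (2 : ℝ) ≤ P.card := by exact_mod_cast hP
  set ND := (pgQuad P).filter (fun q => ¬ q.1.1 = q.1.2) with hND
  set DG := (pgQuad P).filter (fun q => q.1.1 = q.1.2) with hDG
  have hsplit : DG.card + ND.card = (pgQuad P).card := Finset.card_filter_add_card_filter_not _
  set G := ND.image (fun q => rep (F q)) with hG
  have hmemND : ∀ q ∈ ND, q.1.1 ∈ peA P (rep (F q)) ∧ q.1.2 ∈ peA P (rep (F q)) ∧
      rep (F q) • q.1.1 = q.2.1 ∧ rep (F q) • q.1.2 = q.2.2 ∧ q.1.1 ≠ q.1.2 := by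
    intro q hq
    obtain ⟨hq, hne⟩ := Finset.mem_filter.mp hq
    obtain ⟨hq, hd⟩ := Finset.mem_filter.mp hq
    obtain ⟨h1, h2⟩ := Finset.mem_product.mp hq
    obtain ⟨h11, h12⟩ := Finset.mem_product.mp h1
    obtain ⟨h21, h22⟩ := Finset.mem_product.mp h2
    have e1 : rep (F q) • q.1.1 = q.2.1 := by rw [hrep1]; exact (hF q hd).1
    have e2 : rep (F q) • q.1.2 = q.2.2 := by rw [hrep1]; exact (hF q hd).2
    exact ⟨Finset.mem_filter.mpr ⟨h11, e1 ▸ h21⟩, Finset.mem_filter.mpr ⟨h12, e2 ▸ h22⟩, e1, e2, hne⟩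
  have hGi : ∀ g ∈ G, ∀ g' ∈ G, (∀ z : ℍ, g • z = g' • z) → g = g' := by
    intro g hg g' hg' h
    obtain ⟨q, -, rfl⟩ := Finset.mem_image.mp hg
    obtain ⟨q', -, rfl⟩ := Finset.mem_image.mp hg'
    exact hrep2 _ _ (fun z => by rw [← hrep1 (F q), ← hrep1 (F q')]; exact h z)
  have hm : ∀ g ∈ G, 2 ≤ (peA P g).card ∧ (peA P g).card ≤ P.card := by
    intro g hg
    refine ⟨?_, Finset.card_le_card (Finset.filter_subset _ _)⟩
    obtain ⟨q, hq, rfl⟩ := Finset.mem_image.mp hg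
    obtain ⟨h1, h2, -, -, hne⟩ := hmemND q hq
    exact Finset.one_lt_card.mpr ⟨_, h1, _, h2, hne⟩
  have hS := pg_sum G (fun g => (peA P g).card) P.card (C0 * (P.card : ℝ) ^ 3) (by omega) hm (by
    intro k hk
    have := hC0 P (G.filter (fun g => k ≤ (peA P g).card)) k hk
      (fun g hg g' hg' => hGi g (Finset.mem_filter.mp hg).1 g' (Finset.mem_filter.mp hg').1)
      (fun g hg => (Finset.mem_filter.mp hg).2)
    exact_mod_cast this)
  have h1 : ND.card ≤ ∑ g ∈ G, (peA P g).card ^ 2 := by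
    have : ∑ g ∈ G, (peA P g).card ^ 2 = (G.sigma (fun g => peA P g ×ˢ peA P g)).card := by
      rw [Finset.card_sigma]
      refine Finset.sum_congr rfl fun g _ => ?_
      rw [Finset.card_product, sq]
    rw [this]
    refine Finset.card_le_card_of_injOn (fun q => ⟨rep (F q), q.1⟩) ?_ ?_
    · intro q hq
      have h := hmemND q hq
      exact Finset.mem_coe.mpr (Finset.mem_sigma.mpr ⟨Finset.mem_image_of_mem _ hq,
        Finset.mem_product.mpr ⟨h.1, h.2.1⟩⟩)
    · intro q hq q' hq' h
      have a := hmemND q hq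
      have a' := hmemND q' hq'
      simp only [Sigma.mk.injEq, heq_eq_eq] at h
      refine Prod.ext h.2 (Prod.ext ?_ ?_)
      · rw [← a.2.2.1, ← a'.2.2.1, h.1, h.2]
      · rw [← a.2.2.2.1, ← a'.2.2.2.1, h.1, h.2]
  have h2 : DG.card ≤ P.card ^ 2 := by
    rw [sq, ← Finset.card_product]
    refine Finset.card_le_card_of_injOn (fun q => (q.1.1, q.2.1)) ?_ ?_
    · intro q hq
      obtain ⟨hq, -⟩ := Finset.mem_filter.mp (Finset.mem_coe.mp hq)
      obtain ⟨hq, -⟩ := Finset.mem_filter.mp hq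
      obtain ⟨h1, h2⟩ := Finset.mem_product.mp hq
      exact Finset.mem_coe.mpr (Finset.mem_product.mpr
        ⟨(Finset.mem_product.mp h1).1, (Finset.mem_product.mp h2).1⟩)
    · have key : ∀ q ∈ DG, q.1.2 = q.1.1 ∧ q.2.2 = q.2.1 := by
        intro q hq
        obtain ⟨hq, he⟩ := Finset.mem_filter.mp hq
        obtain ⟨-, hd⟩ := Finset.mem_filter.mp hq
        rw [he, dist_self] at hd
        exact ⟨he.symm, (dist_eq_zero.mp hd.symm).symm⟩
      intro q hq q' hq' h
      have k1 := key q hq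
      have k2 := key q' hq'
      simp only [Prod.mk.injEq] at h
      exact Prod.ext (Prod.ext h.1 (by rw [k1.1, k2.1, h.1]))
        (Prod.ext h.2 (by rw [k1.2, k2.2, h.2]))
  have h1' : (ND.card : ℝ) ≤ ∑ g ∈ G, ((peA P g).card : ℝ) ^ 2 := by exact_mod_cast h1
  have h2' : (DG.card : ℝ) ≤ (P.card : ℝ) ^ 2 := by exact_mod_cast h2
  have h3 : (P.card : ℝ) ^ 2 ≤ (P.card : ℝ) ^ 3 * Real.log P.card := by
    have l1 : Real.log 2 ≤ Real.log P.card := Real.log_le_log (by norm_num) hP'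
    have l2 := Real.log_two_gt_d9
    have l3 : 1 ≤ (P.card : ℝ) * Real.log P.card := by nlinarith
    have : (0 : ℝ) ≤ (P.card : ℝ) ^ 2 := by positivity
    calc (P.card : ℝ) ^ 2 = (P.card : ℝ) ^ 2 * 1 := by ring
      _ ≤ (P.card : ℝ) ^ 2 * ((P.card : ℝ) * Real.log P.card) := mul_le_mul_of_nonneg_left l3 this
      _ = _ := by ring
  have h4 : ((pgQuad P).card : ℝ) = DG.card + ND.card := by exact_mod_cast hsplit.symm
  rw [h4]
  have h5 := h1'.trans hS
  calc (DG.card : ℝ) + ND.card ≤ (P.card : ℝ) ^ 3 * Real.log P.card +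
        4 * (C0 * (P.card : ℝ) ^ 3) * Real.log P.card := add_le_add (h2'.trans h3) h5
    _ = _ := by ring

/-- There is an absolute constant `c > 0` such that for any subgroup `Γ ≤ SL(2,ℝ)`,
finite sets `P₁, P₂ ⊆ ℍ²` whose points project to distinct points of the quotient,
and a geodesic cover `Γ₀ ⊆ Γ` of cardinality `K ≥ 1` for `P₁ ∪ P₂`, the number of
distinct cross distances is at least
`(c/K³) · |P₁|² · |P₂|² / (n³ · log(K·n))` where `n = |P₁ ∪ P₂| ≥ 2`. -/
theorem distinct_cross_distances :
    ∃ c : ℝ, 0 < c ∧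
      ∀ (Γ : Subgroup SL(2, ℝ)) (P₁ P₂ : Finset ℍ) (Γ₀ : Finset SL(2, ℝ))
        (hne : Γ₀.Nonempty),
        (↑Γ₀ : Set SL(2, ℝ)) ⊆ (↑Γ : Set SL(2, ℝ)) →
        2 ≤ (P₁ ∪ P₂).card →
        (∀ p ∈ P₁ ∪ P₂, ∀ q ∈ P₁ ∪ P₂, p ≠ q → quotDist Γ p q ≠ 0) →
        (∀ p ∈ P₁ ∪ P₂, ∀ q ∈ P₁ ∪ P₂,
          quotDist Γ p q = Γ₀.inf' hne fun γ => dist p (γ • q)) →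
        c / (Γ₀.card : ℝ) ^ 3 *
            ((P₁.card : ℝ) ^ 2 * (P₂.card : ℝ) ^ 2) /
            (((P₁ ∪ P₂).card : ℝ) ^ 3 *
              Real.log ((Γ₀.card : ℝ) * ((P₁ ∪ P₂).card : ℝ))) ≤
          ({t : ℝ | ∃ p₁ ∈ P₁, ∃ p₂ ∈ P₂, quotDist Γ p₁ p₂ = t}.ncard : ℝ) := by
  classical
  obtain ⟨C, hC, hE⟩ := pg_energy
  refine ⟨1 / (16 * C), by positivity, ?_⟩
  intro Γ P₁ P₂ Γ₀ hne hsub hn hdist hcov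
  set U := P₁ ∪ P₂ with hU
  have hU1 : ∀ p ∈ P₁, p ∈ U := fun p hp => Finset.mem_union_left _ hp
  have hU2 : ∀ p ∈ P₂, p ∈ U := fun p hp => Finset.mem_union_right _ hp
  set P' := U ∪ (Γ₀ ×ˢ P₂).image (fun x => x.1 • x.2) with hP'
  have hK1 : 1 ≤ Γ₀.card := hne.card_pos
  have hcard1 : U.card ≤ P'.card := Finset.card_le_card Finset.subset_union_left
  have hcard2 : P'.card ≤ 2 * Γ₀.card * U.card := by
    have e1 : P'.card ≤ U.card + ((Γ₀ ×ˢ P₂).image (fun x => x.1 • x.2)).card :=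
      Finset.card_union_le _ _
    have e2 : ((Γ₀ ×ˢ P₂).image (fun x => x.1 • x.2)).card ≤ Γ₀.card * P₂.card := by
      rw [← Finset.card_product]; exact Finset.card_image_le
    have e3 : P₂.card ≤ U.card := Finset.card_le_card Finset.subset_union_right
    nlinarith
  have hγ : ∀ x : ℍ × ℍ, ∃ γ : SL(2, ℝ), x ∈ P₁ ×ˢ P₂ →
      γ ∈ Γ₀ ∧ quotDist Γ x.1 x.2 = dist x.1 (γ • x.2) := by
    intro x
    by_cases hx : x ∈ P₁ ×ˢ P₂
    · obtain ⟨h1, h2⟩ := Finset.mem_product.mp hx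
      obtain ⟨γ, hγ1, hγ2⟩ := Finset.exists_mem_eq_inf' hne (fun γ => dist x.1 (γ • x.2))
      exact ⟨γ, fun _ => ⟨hγ1, (hcov _ (hU1 _ h1) _ (hU2 _ h2)).trans hγ2⟩⟩
    · exact ⟨1, fun h => absurd h hx⟩
  choose γ hγ using hγ
  let f : ℍ × ℍ → ℍ × ℍ := fun x => (x.1, γ x • x.2)
  have hfi : ∀ x ∈ P₁ ×ˢ P₂, ∀ y ∈ P₁ ×ˢ P₂, f x = f y → x = y := by
    intro x hx y hy h
    simp only [f, Prod.mk.injEq] at h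
    refine Prod.ext h.1 ?_
    by_contra hxy
    refine hdist x.2 (hU2 _ (Finset.mem_product.mp hx).2) y.2 (hU2 _ (Finset.mem_product.mp hy).2)
      hxy ?_
    have gx : γ x ∈ Γ := hsub (Finset.mem_coe.mpr (hγ x hx).1)
    have gy : γ y ∈ Γ := hsub (Finset.mem_coe.mpr (hγ y hy).1)
    refine le_antisymm ?_ (Real.iInf_nonneg fun _ => dist_nonneg)
    have hb : BddBelow (Set.range fun g : Γ => dist x.2 ((g : SL(2, ℝ)) • y.2)) :=
      ⟨0, by rintro _ ⟨g, rfl⟩; exact dist_nonneg⟩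
    refine (ciInf_le hb ⟨(γ x)⁻¹ * γ y, Γ.mul_mem (Γ.inv_mem gx) gy⟩).trans ?_
    simp only
    rw [mul_smul, ← h.2, inv_smul_smul, dist_self]
  have hfP : ∀ x ∈ P₁ ×ˢ P₂, f x ∈ P' ×ˢ P' := by
    intro x hx
    obtain ⟨h1, h2⟩ := Finset.mem_product.mp hx
    refine Finset.mem_product.mpr ⟨Finset.mem_union_left _ (hU1 _ h1), Finset.mem_union_right _ ?_⟩
    exact Finset.mem_image.mpr ⟨(γ x, x.2), Finset.mem_product.mpr ⟨(hγ x hx).1, h2⟩, rfl⟩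
  set D := (P₁ ×ˢ P₂).image (fun x => quotDist Γ x.1 x.2) with hD
  have hset : {t : ℝ | ∃ p₁ ∈ P₁, ∃ p₂ ∈ P₂, quotDist Γ p₁ p₂ = t} = (D : Set ℝ) := by
    ext t
    simp only [hD, Set.mem_setOf_eq, Finset.coe_image, Set.mem_image, Finset.mem_coe,
      Finset.mem_product, Prod.exists]
    constructor
    · rintro ⟨a, ha, b, hb, h⟩
      exact ⟨a, b, ⟨ha, hb⟩, h⟩
    · rintro ⟨a, b, ⟨ha, hb⟩, h⟩
      exact ⟨a, ha, b, hb, h⟩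
  rw [hset, Set.ncard_coe_finset]
  let fib : ℝ → Finset (ℍ × ℍ) := fun t => (P₁ ×ˢ P₂).filter (fun x => quotDist Γ x.1 x.2 = t)
  have hfib : P₁.card * P₂.card = ∑ t ∈ D, (fib t).card := by
    rw [← Finset.card_product]
    exact Finset.card_eq_sum_card_fiberwise (fun x hx => Finset.mem_image_of_mem _ hx)
  have hq : ∑ t ∈ D, (fib t).card ^ 2 ≤ (pgQuad P').card := by
    have e : ∑ t ∈ D, (fib t).card ^ 2 = (D.sigma (fun t => fib t ×ˢ fib t)).card := by
      rw [Finset.card_sigma]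
      refine Finset.sum_congr rfl fun t _ => ?_
      rw [Finset.card_product, sq]
    rw [e]
    refine Finset.card_le_card_of_injOn (fun z => (f z.2.1, f z.2.2)) ?_ ?_
    · rintro ⟨t, x, y⟩ hz
      obtain ⟨-, hz⟩ := Finset.mem_sigma.mp (Finset.mem_coe.mp hz)
      obtain ⟨hx, hy⟩ := Finset.mem_product.mp hz
      obtain ⟨hx, hxt⟩ := Finset.mem_filter.mp hx
      obtain ⟨hy, hyt⟩ := Finset.mem_filter.mp hy
      refine Finset.mem_coe.mpr (Finset.mem_filter.mpr
        ⟨Finset.mem_product.mpr ⟨hfP _ hx, hfP _ hy⟩, ?_⟩)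
      have a := (hγ _ hx).2
      have b := (hγ _ hy).2
      exact a.symm.trans (hxt.trans (hyt.symm.trans b))
    · rintro ⟨t, x, y⟩ hz ⟨t', x', y'⟩ hz' h
      obtain ⟨-, hz⟩ := Finset.mem_sigma.mp (Finset.mem_coe.mp hz)
      obtain ⟨-, hz'⟩ := Finset.mem_sigma.mp (Finset.mem_coe.mp hz')
      obtain ⟨hx, hy⟩ := Finset.mem_product.mp hz
      obtain ⟨hx, hxt⟩ := Finset.mem_filter.mp hx
      obtain ⟨hy, hyt⟩ := Finset.mem_filter.mp hy
      obtain ⟨hx', hy'⟩ := Finset.mem_product.mp hz'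
      obtain ⟨hx', hxt'⟩ := Finset.mem_filter.mp hx'
      obtain ⟨hy', hyt'⟩ := Finset.mem_filter.mp hy'
      have h := Prod.mk.inj h
      have e1 := hfi _ hx _ hx' h.1
      have e2 := hfi _ hy _ hy' h.2
      simp only at e1 e2 hxt hxt'
      subst e1 e2
      have : t = t' := hxt.symm.trans hxt'
      subst this
      rfl
  have hcs : ((P₁.card : ℝ) * P₂.card) ^ 2 ≤ D.card * ((pgQuad P').card : ℝ) := by
    have h1 := sq_sum_le_card_mul_sum_sq (s := D) (f := fun t => (fib t).card)
    rw [← hfib] at h1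
    have h2 := h1.trans (Nat.mul_le_mul_left D.card hq)
    exact_mod_cast h2
  have hen := hE P' (hn.trans hcard1)
  have hn' : (2 : ℝ) ≤ U.card := by exact_mod_cast hn
  have hK' : (1 : ℝ) ≤ Γ₀.card := by exact_mod_cast hK1
  have hc1 : (2 : ℝ) ≤ P'.card := by exact_mod_cast hn.trans hcard1
  have hc2 : (P'.card : ℝ) ≤ 2 * Γ₀.card * U.card := by exact_mod_cast hcard2
  have hKn : (2 : ℝ) ≤ Γ₀.card * U.card := by nlinarith
  have hl : Real.log P'.card ≤ 2 * Real.log (Γ₀.card * U.card) := by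
    rw [← Real.log_rpow (by linarith)]
    refine Real.log_le_log (by linarith) ?_
    norm_cast at *
    nlinarith
  have hl0 : 0 < Real.log (Γ₀.card * U.card) := Real.log_pos (by linarith)
  have hlp : 0 ≤ Real.log P'.card := Real.log_nonneg (by linarith)
  have h8 : (P'.card : ℝ) ^ 3 ≤ 8 * (Γ₀.card : ℝ) ^ 3 * (U.card : ℝ) ^ 3 := by
    calc (P'.card : ℝ) ^ 3 ≤ (2 * Γ₀.card * U.card) ^ 3 := by gcongr
      _ = _ := by ring
  have hfin : (P₁.card : ℝ) ^ 2 * (P₂.card : ℝ) ^ 2 ≤ D.card * (16 * C * (Γ₀.card : ℝ) ^ 3 *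
      ((U.card : ℝ) ^ 3 * Real.log (Γ₀.card * U.card))) := by
    calc (P₁.card : ℝ) ^ 2 * (P₂.card : ℝ) ^ 2 = ((P₁.card : ℝ) * P₂.card) ^ 2 := by ring
      _ ≤ D.card * ((pgQuad P').card : ℝ) := hcs
      _ ≤ D.card * (C * (P'.card : ℝ) ^ 3 * Real.log P'.card) := by gcongr
      _ ≤ D.card * (C * (8 * (Γ₀.card : ℝ) ^ 3 * (U.card : ℝ) ^ 3) *
          (2 * Real.log (Γ₀.card * U.card))) := by gcongr
      _ = _ := by ring
  have hU0 : (0 : ℝ) < U.card := by linarith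
  have hK0 : (0 : ℝ) < Γ₀.card := by linarith
  rw [div_le_iff₀ (by positivity)]
  have e : 1 / (16 * C) / (Γ₀.card : ℝ) ^ 3 * ((P₁.card : ℝ) ^ 2 * (P₂.card : ℝ) ^ 2) =
      ((P₁.card : ℝ) ^ 2 * (P₂.card : ℝ) ^ 2) / (16 * C * (Γ₀.card : ℝ) ^ 3) := by
    field_simp
  rw [e, div_le_iff₀ (by positivity)]
  calc _ ≤ _ := hfin
    _ = _ := by ring

end
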